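/- arXiv:1805.07723 — 8 statements merged into one kernel-verified Lean document; each statement's English description precedes it below -/
import Mathlib

section
/- For any probability measures P and Q on a measurable space with P absolutely continuous with respect to Q, and any c ∈ [0,1], the c-primitive f-divergence satisfies I_{f_c}(P,Q) = (1/2)·∫|c·dP − (1−c)·dQ| − (1/2)·|1 − 2c|, where ∫|c·dP − (1−c)·dQ| denotes the total variation distance between the (sub)measures cP and (1−c)Q. -/
open MeasureTheory

/-- The `c`-primitive `f`-divergence `I_{f_c}(P,Q) = ∫ f_c(dP/dQ) dQ`, where
`f_c(t) = min(1-c, c) - min(1-c, c*t)`. -/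
noncomputable def Ifc {Ω : Type*} [MeasurableSpace Ω] (c : ℝ) (P Q : Measure Ω) : ℝ :=
  ∫ x, (min (1 - c) c - min (1 - c) (c * ((P.rnDeriv Q) x).toReal)) ∂Q

lemma density_facts {Ω : Type*} [MeasurableSpace Ω] (P μ : Measure Ω) [IsProbabilityMeasure P]
    (p : Ω → ℝ) (hp : Measurable p) (hp0 : ∀ x, 0 ≤ p x)
    (hP : P = μ.withDensity (fun x => ENNReal.ofReal (p x))) :
    Integrable p μ ∧ ∫ x, p x ∂μ = 1 := by
  have h1 : ∫⁻ x, ENNReal.ofReal (p x) ∂μ = 1 := by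
    have h := measure_univ (μ := P)
    rw [hP, withDensity_apply _ MeasurableSet.univ, setLIntegral_univ] at h
    exact h
  have h0 : 0 ≤ᵐ[μ] p := Filter.Eventually.of_forall hp0
  refine ⟨(lintegral_ofReal_ne_top_iff_integrable hp.aestronglyMeasurable h0).1 (by simp [h1]), ?_⟩
  rw [integral_eq_lintegral_of_nonneg_ae h0 hp.aestronglyMeasurable, h1]
  simp

/-- `I_{f_c}(P,Q) = (1/2)·∫ |c·p − (1−c)·q| dμ − (1/2)·|1 − 2c|`, where
`p, q` are densities of `P, Q` with respect to a common dominating measure `μ`, so that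
`∫ |c·p − (1−c)·q| dμ` is the total variation distance between `cP` and `(1−c)Q`. -/
theorem primitive_fdiv_eq_tv_form
    {Ω : Type*} [MeasurableSpace Ω] (P Q μ : Measure Ω)
    [IsProbabilityMeasure P] [IsProbabilityMeasure Q] [SigmaFinite μ]
    (hPQ : P ≪ Q)
    (p q : Ω → ℝ) (hp : Measurable p) (hq : Measurable q)
    (hp0 : ∀ x, 0 ≤ p x) (hq0 : ∀ x, 0 ≤ q x)
    (hP : P = μ.withDensity (fun x => ENNReal.ofReal (p x)))
    (hQ : Q = μ.withDensity (fun x => ENNReal.ofReal (q x)))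
    (c : ℝ) (hc : c ∈ Set.Icc (0 : ℝ) 1) :
    Ifc c P Q = (1 / 2) * (∫ x, |c * p x - (1 - c) * q x| ∂μ) - (1 / 2) * |1 - 2 * c| := by
  obtain ⟨hpi, hp1⟩ := density_facts P μ p hp hp0 hP
  obtain ⟨hqi, hq1⟩ := density_facts Q μ q hq hq0 hQ
  have hr : Measurable (P.rnDeriv Q) := Measure.measurable_rnDeriv P Q
  have hmq : Measurable (fun x => ENNReal.ofReal (q x)) := hq.ennreal_ofReal
  have hae : (fun x => ENNReal.ofReal (p x)) =ᵐ[μ]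
      (fun x => ENNReal.ofReal (q x)) * P.rnDeriv Q := by
    rw [← withDensity_eq_iff_of_sigmaFinite hp.ennreal_ofReal.aemeasurable
      (hmq.mul hr).aemeasurable, withDensity_mul μ hmq hr, ← hP, ← hQ,
      Measure.withDensity_rnDeriv_eq P Q hPQ]
  have hpt : (fun x => (ENNReal.ofReal (q x)).toReal •
        (min (1 - c) c - min (1 - c) (c * ((P.rnDeriv Q) x).toReal))) =ᵐ[μ]
      fun x => (min (1 - c) c - (1 - c) / 2) * q x - c / 2 * p x
        + 1 / 2 * |c * p x - (1 - c) * q x| := by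
    filter_upwards [hae] with x hx
    have hx' : p x = q x * ((P.rnDeriv Q) x).toReal := by
      have := congrArg ENNReal.toReal hx
      simpa [ENNReal.toReal_mul, ENNReal.toReal_ofReal (hp0 x),
        ENNReal.toReal_ofReal (hq0 x)] using this
    rw [ENNReal.toReal_ofReal (hq0 x), smul_eq_mul, hx']
    generalize ((P.rnDeriv Q) x).toReal = r
    have habs : |c * (q x * r) - (1 - c) * q x| = q x * |c * r - (1 - c)| := by
      rw [show c * (q x * r) - (1 - c) * q x = q x * (c * r - (1 - c)) by ring, abs_mul,
        abs_of_nonneg (hq0 x)]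
    have hm : min (1 - c) (c * r) = ((1 - c) + c * r - |c * r - (1 - c)|) / 2 := by
      rcases le_total (1 - c) (c * r) with h | h
      · rw [min_eq_left h, abs_of_nonneg (by linarith)]; ring
      · rw [min_eq_right h, abs_of_nonpos (by linarith)]; ring
    rw [habs, hm]
    ring
  have hI : Ifc c P Q = ∫ x, (ENNReal.ofReal (q x)).toReal •
        (min (1 - c) c - min (1 - c) (c * ((P.rnDeriv Q) x).toReal)) ∂μ := by
    rw [← integral_withDensity_eq_integral_toReal_smul hmq
      (Filter.Eventually.of_forall fun x => ENNReal.ofReal_lt_top), ← hQ]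
    rfl
  have habsi : Integrable (fun x => |c * p x - (1 - c) * q x|) μ :=
    ((hpi.const_mul c).sub (hqi.const_mul (1 - c))).abs
  have hsub : Integrable (fun x => (min (1 - c) c - (1 - c) / 2) * q x - c / 2 * p x) μ :=
    (hqi.const_mul _).sub (hpi.const_mul _)
  rw [hI, integral_congr_ae hpt, integral_add hsub
    (habsi.const_mul _), integral_sub (hqi.const_mul _) (hpi.const_mul _),
    integral_const_mul, integral_const_mul, integral_const_mul, hp1, hq1]
  have hm : min (1 - c) c = (1 - |1 - 2 * c|) / 2 := by
    rcases le_total (1 - c) c with h | h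
    · rw [min_eq_left h, abs_of_nonpos (by linarith)]; ring
    · rw [min_eq_right h, abs_of_nonneg (by linarith)]; ring
  rw [hm]
  ring
end

section
/- For all probability measures P and Q on a measurable space with P ≪ Q and every c ∈ [0,1], the c-primitive f-divergence is bounded by the Hellinger distance as I_{f_c}(P,Q) ≤ min(c, 1−c) · He(P,Q) · sqrt(1 − He²(P,Q)/4), where He(P,Q) := sqrt(He²(P,Q)). -/
open MeasureTheory

/-- The squared Hellinger distance `He²(P,Q) = ∫ (√(dP/dμ) − √(dQ/dμ))² dμ`, computed with
respect to the common dominating measure `μ = P + Q`. -/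
noncomputable def hellingerSq {Ω : Type*} [MeasurableSpace Ω] (P Q : Measure Ω) : ℝ :=
  ∫ x, (Real.sqrt ((P.rnDeriv (P + Q) x).toReal)
        - Real.sqrt ((Q.rnDeriv (P + Q) x).toReal)) ^ 2 ∂(P + Q)

lemma aux_hell {Ω : Type*} [MeasurableSpace Ω] (P Q : Measure Ω)
    [IsProbabilityMeasure P] [IsProbabilityMeasure Q] (hPQ : P ≪ Q) :
    hellingerSq P Q = ∫ x, (1 - Real.sqrt ((P.rnDeriv Q) x).toReal) ^ 2 ∂Q := by
  have hQ : Q ≪ P + Q := by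
    rw [add_comm]; exact Measure.AbsolutelyContinuous.rfl.add_right P
  rw [← integral_rnDeriv_smul hQ]
  unfold hellingerSq
  apply integral_congr_ae
  filter_upwards [Measure.rnDeriv_mul_rnDeriv (κ := P + Q) hPQ] with x hx
  rw [← hx]
  simp only [Pi.mul_apply, ENNReal.toReal_mul, smul_eq_mul]
  rw [Real.sqrt_mul ENNReal.toReal_nonneg]
  have := Real.sq_sqrt (ENNReal.toReal_nonneg (a := Q.rnDeriv (P + Q) x))
  set s := Real.sqrt (Q.rnDeriv (P + Q) x).toReal
  rw [← this]; ring

lemma aux_pt (c t : ℝ) (h0 : 0 ≤ c) (h1 : c ≤ 1) (ht : 0 ≤ t) :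
    min (1 - c) c - min (1 - c) (c * t) ≤
      min c (1 - c) * ((|1 - Real.sqrt t| * (1 + Real.sqrt t)) / 2 + (1 - t) / 2) := by
  have hs := Real.sqrt_nonneg t
  have e : |1 - Real.sqrt t| * (1 + Real.sqrt t) = |1 - t| := by
    rw [← abs_of_nonneg (by positivity : 0 ≤ 1 + Real.sqrt t), ← abs_mul]
    congr 1
    nlinarith [Real.sq_sqrt ht]
  rw [e]
  rcases le_total c (1 - c) with h | h <;> rcases le_total t 1 with h' | h' <;>
    rcases le_total (1 - c) (c * t) with h'' | h'' <;>
    simp only [h, h'', min_eq_left, min_eq_right] <;>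
    first
    | (rw [abs_of_nonneg (by linarith)]; nlinarith)
    | (rw [abs_of_nonpos (by linarith)]; nlinarith)

lemma aux_cs {Ω : Type*} [MeasurableSpace Ω] (Q : Measure Ω) (f g : Ω → ℝ)
    (hf : MemLp f 2 Q) (hg : MemLp g 2 Q) (hf0 : ∀ x, 0 ≤ f x) (hg0 : ∀ x, 0 ≤ g x) :
    ∫ x, f x * g x ∂Q ≤ Real.sqrt (∫ x, f x ^ 2 ∂Q) * Real.sqrt (∫ x, g x ^ 2 ∂Q) := by
  have := integral_mul_le_Lp_mul_Lq_of_nonneg (μ := Q) (f := f) (g := g)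
    Real.HolderConjugate.two_two (.of_forall hf0) (.of_forall hg0)
    (by simpa using hf) (by simpa using hg)
  simpa [Real.sqrt_eq_rpow] using this

/-- `I_{f_c}(P,Q) ≤ min(c, 1−c) · He(P,Q) · √(1 − He²(P,Q)/4)`,
where `He(P,Q) = √(He²(P,Q))`. -/
theorem primitive_fdiv_le_hellinger_joint_range
    {Ω : Type*} [MeasurableSpace Ω] (P Q : Measure Ω)
    [IsProbabilityMeasure P] [IsProbabilityMeasure Q]
    (hPQ : P ≪ Q) (c : ℝ) (hc : c ∈ Set.Icc (0 : ℝ) 1) :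
    Ifc c P Q ≤ min c (1 - c) * Real.sqrt (hellingerSq P Q)
        * Real.sqrt (1 - hellingerSq P Q / 4) := by
  obtain ⟨h0, h1⟩ := hc
  rw [aux_hell P Q hPQ]
  set t : Ω → ℝ := fun x => ((P.rnDeriv Q) x).toReal with ht
  have htm : Measurable t := (Measure.measurable_rnDeriv P Q).ennreal_toReal
  have ht0 : ∀ x, 0 ≤ t x := fun x => ENNReal.toReal_nonneg
  have hti : Integrable t Q := Measure.integrable_toReal_rnDeriv
  have ht1 : ∫ x, t x ∂Q = 1 := by
    rw [ht, Measure.integral_toReal_rnDeriv hPQ]; simp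
  have hsm : Measurable fun x => Real.sqrt (t x) := htm.sqrt
  have hsL : MemLp (fun x => Real.sqrt (t x)) 2 Q := by
    rw [memLp_two_iff_integrable_sq hsm.aestronglyMeasurable]
    simpa only [Real.sq_sqrt (ht0 _)] using hti
  have h1L : MemLp (fun _ : Ω => (1 : ℝ)) 2 Q := memLp_const 1
  have hmL : MemLp (fun x => |1 - Real.sqrt (t x)|) 2 Q := (h1L.sub hsL).abs
  have hpL : MemLp (fun x => 1 + Real.sqrt (t x)) 2 Q := h1L.add hsL
  have hI : Integrable (fun x => |1 - Real.sqrt (t x)| * (1 + Real.sqrt (t x))) Q :=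
    hmL.integrable_mul hpL
  have hcs := aux_cs Q _ _ hmL hpL (fun x => abs_nonneg _)
    (fun x => by have := Real.sqrt_nonneg (t x); linarith)
  simp only [sq_abs] at hcs
  have hsum : ∫ x, (1 + Real.sqrt (t x)) ^ 2 ∂Q
      = 4 - ∫ x, (1 - Real.sqrt (t x)) ^ 2 ∂Q := by
    have hdS : Integrable (fun x => (1 - Real.sqrt (t x)) ^ 2) Q := (h1L.sub hsL).integrable_sq
    rw [eq_sub_iff_add_eq, ← integral_add hpL.integrable_sq hdS]
    have : ∀ x, (1 + Real.sqrt (t x)) ^ 2 + (1 - Real.sqrt (t x)) ^ 2 = 2 + 2 * t x := by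
      intro x
      nlinarith [Real.sq_sqrt (ht0 x)]
    change ∫ x, ((1 + Real.sqrt (t x)) ^ 2 + (1 - Real.sqrt (t x)) ^ 2) ∂Q = 4
    simp only [this]
    rw [integral_add (integrable_const _) (hti.const_mul 2), integral_const_mul, ht1]
    norm_num
  rw [hsum] at hcs
  set H := ∫ x, (1 - Real.sqrt (t x)) ^ 2 ∂Q
  have h4 : Real.sqrt (4 - H) = 2 * Real.sqrt (1 - H / 4) := by
    rw [show 4 - H = 2 ^ 2 * (1 - H / 4) by ring, Real.sqrt_mul (by norm_num),
      Real.sqrt_sq (by norm_num)]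
  rw [h4] at hcs
  have hm : 0 ≤ min c (1 - c) := le_min h0 (by linarith)
  have hJ : Integrable (fun x => (1 - t x) / 2) Q :=
    ((integrable_const 1).sub hti).div_const 2
  have hle : Ifc c P Q ≤ ∫ x, min c (1 - c) *
      ((|1 - Real.sqrt (t x)| * (1 + Real.sqrt (t x))) / 2 + (1 - t x) / 2) ∂Q := by
    unfold Ifc
    refine integral_mono ?_ (((hI.div_const 2).add hJ).const_mul _) ?_
    · exact (integrable_const _).sub ((integrable_const _).inf (hti.const_mul c))
    · intro x
      exact aux_pt c (t x) h0 h1 (ht0 x)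
  refine hle.trans ?_
  rw [integral_const_mul, integral_add (hI.div_const 2) hJ, integral_div, integral_div,
    integral_sub (integrable_const _) hti, ht1, mul_assoc]
  apply mul_le_mul_of_nonneg_left _ hm
  simp
  linarith
end

section
/- For all probability measures P and Q on a measurable space with P ≪ Q and every c ∈ [0,1], the c-primitive f-divergence is bounded by the Hellinger distance: I_{f_c}(P,Q) ≤ min(c, 1−c) · He(P,Q), where He(P,Q) := sqrt(He²(P,Q)). -/
open MeasureTheory

lemma aux_pt_s5 (p q t a : ℝ) (hp : 0 ≤ p) (hq : 0 ≤ q) (ha : 0 < a) (h : t * q = p) :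
    q * (1 - min 1 t) ≤ (q - p) / 2 + a / 4 * (Real.sqrt p - Real.sqrt q) ^ 2
      + (1 / (2 * a)) * (p + q) := by
  have e1 : q * (1 - min 1 t) = (q - p) / 2 + |p - q| / 2 := by
    rcases le_total 1 t with ht | ht
    · rw [min_eq_left ht, abs_of_nonneg (by nlinarith)]; ring
    · rw [min_eq_right ht, abs_of_nonpos (by nlinarith), ← h]; ring
  rw [e1]
  obtain ⟨x, hx, rfl⟩ : ∃ x, 0 ≤ x ∧ p = x ^ 2 := ⟨_, Real.sqrt_nonneg p, (Real.sq_sqrt hp).symm⟩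
  obtain ⟨y, hy, rfl⟩ : ∃ x, 0 ≤ x ∧ q = x ^ 2 := ⟨_, Real.sqrt_nonneg q, (Real.sq_sqrt hq).symm⟩
  rw [Real.sqrt_sq hx, Real.sqrt_sq hy]
  have e2 : |x ^ 2 - y ^ 2| = |x - y| * (x + y) := by
    rw [← abs_of_nonneg (add_nonneg hx hy), ← abs_mul]; ring_nf
  have e3 : a / 4 * (x - y) ^ 2 + (1 / (4 * a)) * (x + y) ^ 2 - |x - y| * (x + y) / 2
      = (a * |x - y| - (x + y)) ^ 2 / (4 * a) := by
    rw [← sq_abs (x - y)]; field_simp; ring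
  have e4 : 0 ≤ (a * |x - y| - (x + y)) ^ 2 / (4 * a) := by positivity
  have e5 : (1 / (2 * a)) * (x ^ 2 + y ^ 2) - (1 / (4 * a)) * (x + y) ^ 2
      = (x - y) ^ 2 / (4 * a) := by field_simp; ring
  have e6 : 0 ≤ (x - y) ^ 2 / (4 * a) := by positivity
  rw [e2]; linarith

lemma aux_tv {Ω : Type*} [MeasurableSpace Ω] (P Q : Measure Ω)
    [IsProbabilityMeasure P] [IsProbabilityMeasure Q] (hPQ : P ≪ Q) (a : ℝ) (ha : 0 < a) :
    ∫ x, (1 - min 1 ((P.rnDeriv Q) x).toReal) ∂Q ≤ a / 4 * hellingerSq P Q + 1 / a := by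
  have hP : P ≪ P + Q := Measure.AbsolutelyContinuous.rfl.add_right Q
  have hQ : Q ≪ P + Q := by
    rw [add_comm]; exact Measure.AbsolutelyContinuous.rfl.add_right P
  have iP : Integrable (fun x => (P.rnDeriv (P + Q) x).toReal) (P + Q) :=
    Measure.integrable_toReal_rnDeriv
  have iQ : Integrable (fun x => (Q.rnDeriv (P + Q) x).toReal) (P + Q) :=
    Measure.integrable_toReal_rnDeriv
  have vP : ∫ x, (P.rnDeriv (P + Q) x).toReal ∂(P + Q) = 1 := by
    rw [Measure.integral_toReal_rnDeriv hP]; simp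
  have vQ : ∫ x, (Q.rnDeriv (P + Q) x).toReal ∂(P + Q) = 1 := by
    rw [Measure.integral_toReal_rnDeriv hQ]; simp
  have mP : Measurable (fun x => (P.rnDeriv (P + Q) x).toReal) :=
    (Measure.measurable_rnDeriv _ _).ennreal_toReal
  have mQ : Measurable (fun x => (Q.rnDeriv (P + Q) x).toReal) :=
    (Measure.measurable_rnDeriv _ _).ennreal_toReal
  have mT : Measurable (fun x => (P.rnDeriv Q x).toReal) :=
    (Measure.measurable_rnDeriv _ _).ennreal_toReal
  have iH : Integrable (fun x => (Real.sqrt ((P.rnDeriv (P + Q) x).toReal)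
        - Real.sqrt ((Q.rnDeriv (P + Q) x).toReal)) ^ 2) (P + Q) := by
    refine (iP.add iQ).mono' (by fun_prop) (Filter.Eventually.of_forall fun x => ?_)
    have h1 := Real.sq_sqrt (ENNReal.toReal_nonneg (a := P.rnDeriv (P + Q) x))
    have h2 := Real.sq_sqrt (ENNReal.toReal_nonneg (a := Q.rnDeriv (P + Q) x))
    have h3 := mul_nonneg (Real.sqrt_nonneg (P.rnDeriv (P + Q) x).toReal)
      (Real.sqrt_nonneg (Q.rnDeriv (P + Q) x).toReal)
    rw [Real.norm_of_nonneg (sq_nonneg _)]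
    simp only [Pi.add_apply]
    nlinarith
  rw [← integral_rnDeriv_smul hQ]
  have key : ∫ x, (Q.rnDeriv (P + Q) x).toReal • (1 - min 1 ((P.rnDeriv Q) x).toReal) ∂(P + Q)
     ≤ ∫ x, (((Q.rnDeriv (P + Q) x).toReal - (P.rnDeriv (P + Q) x).toReal) / 2
      + a / 4 * (Real.sqrt ((P.rnDeriv (P + Q) x).toReal)
        - Real.sqrt ((Q.rnDeriv (P + Q) x).toReal)) ^ 2
      + (1 / (2 * a)) * ((P.rnDeriv (P + Q) x).toReal + (Q.rnDeriv (P + Q) x).toReal)) ∂(P + Q) := by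
    refine integral_mono_ae ?_ ?_ ?_
    · refine iQ.mono' (by simp only [smul_eq_mul]; fun_prop)
        (Filter.Eventually.of_forall fun x => ?_)
      have h0 := ENNReal.toReal_nonneg (a := Q.rnDeriv (P + Q) x)
      have h1 := ENNReal.toReal_nonneg (a := P.rnDeriv Q x)
      have h2 : 0 ≤ min 1 (P.rnDeriv Q x).toReal := le_min zero_le_one h1
      have h3 : min 1 (P.rnDeriv Q x).toReal ≤ 1 := min_le_left _ _
      rw [smul_eq_mul, Real.norm_of_nonneg (mul_nonneg h0 (by linarith))]
      nlinarith
    · exact (((iQ.sub iP).div_const 2).add (iH.const_mul _)).add ((iP.add iQ).const_mul _)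
    · filter_upwards [Measure.rnDeriv_mul_rnDeriv (κ := P + Q) hPQ] with x hx
      refine aux_pt_s5 _ _ _ a ENNReal.toReal_nonneg ENNReal.toReal_nonneg ha ?_
      rw [← hx]; simp
  refine key.trans (le_of_eq ?_)
  rw [integral_add, integral_add, integral_div, integral_sub iQ iP,
    integral_const_mul, integral_const_mul, integral_add iP iQ, vP, vQ, hellingerSq]
  · field_simp; ring
  · exact (iQ.sub iP).div_const 2
  · exact iH.const_mul _
  · exact ((iQ.sub iP).div_const 2).add (iH.const_mul _)
  · exact (iP.add iQ).const_mul _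

/-- `I_{f_c}(P,Q) ≤ min(c, 1−c) · He(P,Q)`, where `He(P,Q) = √(He²(P,Q))`. -/
theorem primitive_fdiv_le_hellinger
    {Ω : Type*} [MeasurableSpace Ω] (P Q : Measure Ω)
    [IsProbabilityMeasure P] [IsProbabilityMeasure Q]
    (hPQ : P ≪ Q) (c : ℝ) (hc : c ∈ Set.Icc (0 : ℝ) 1) :
    Ifc c P Q ≤ min c (1 - c) * Real.sqrt (hellingerSq P Q) := by
  obtain ⟨h0, h1⟩ := hc
  have mT : Measurable (fun x => (P.rnDeriv Q x).toReal) :=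
    (Measure.measurable_rnDeriv _ _).ennreal_toReal
  have hm : 0 ≤ min c (1 - c) := le_min h0 (by linarith)
  have hI : Ifc c P Q ≤ min c (1 - c) * ∫ x, (1 - min 1 ((P.rnDeriv Q) x).toReal) ∂Q := by
    rw [Ifc, ← integral_const_mul]
    have iT : Integrable (fun x => (P.rnDeriv Q x).toReal) Q := Measure.integrable_toReal_rnDeriv
    refine integral_mono ?_ ?_ fun x => ?_
    · exact (integrable_const _).sub ((integrable_const _).inf (iT.const_mul c))
    · exact ((integrable_const _).sub ((integrable_const _).inf iT)).const_mul _
    · have ht := ENNReal.toReal_nonneg (a := P.rnDeriv Q x)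
      have hl := min_le_left c (1 - c)
      have hr := min_le_right c (1 - c)
      have a1 := min_le_left 1 (P.rnDeriv Q x).toReal
      have a2 := min_le_right 1 (P.rnDeriv Q x).toReal
      have a3 : 0 ≤ min 1 (P.rnDeriv Q x).toReal := le_min zero_le_one ht
      have : min c (1 - c) * min 1 (P.rnDeriv Q x).toReal
          ≤ min (1 - c) (c * (P.rnDeriv Q x).toReal) := by
        refine le_min ?_ (mul_le_mul hl a2 a3 h0)
        nlinarith
      simp only [min_comm (1 - c) c]
      linarith
  refine hI.trans (mul_le_mul_of_nonneg_left ?_ hm)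
  have hH : 0 ≤ hellingerSq P Q := integral_nonneg fun x => sq_nonneg _
  refine le_of_forall_pos_le_add fun ε hε => ?_
  set s := Real.sqrt (hellingerSq P Q) with hs
  have hs0 : 0 ≤ s := Real.sqrt_nonneg _
  have hsq : hellingerSq P Q = s ^ 2 := (Real.sq_sqrt hH).symm
  refine (aux_tv P Q hPQ (2 / (s + ε)) (by positivity)).trans ?_
  rw [hsq]
  have hp : 0 < s + ε := by linarith
  have : 2 / (s + ε) / 4 * s ^ 2 ≤ (s + ε) / 2 := by
    rw [div_div, div_mul_eq_mul_div, div_le_iff₀ (by positivity)]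
    nlinarith [mul_nonneg hs0 hε.le]
  rw [one_div_div]
  linarith
end

section
/- (Sub-additivity of squared Hellinger distance under products.) For any finite collections of probability measures P_1,…,P_k and Q_1,…,Q_k, with P_i and Q_i both on the measurable space O_i, the squared Hellinger distance between the product measures satisfies He²(⊗_{i=1}^k P_i, ⊗_{i=1}^k Q_i) ≤ Σ_{i=1}^k He²(P_i, Q_i). -/
open MeasureTheory

theorem hel_change {Ω : Type*} [MeasurableSpace Ω] (P Q ν : Measure Ω)
    [IsProbabilityMeasure P] [IsProbabilityMeasure Q] [SigmaFinite ν] (hP : P ≪ ν) (hQ : Q ≪ ν) :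
    hellingerSq P Q = ∫ x, (Real.sqrt ((P.rnDeriv ν x).toReal)
        - Real.sqrt ((Q.rnDeriv ν x).toReal)) ^ 2 ∂ν := by
  have h1 : P ≪ P + Q := Measure.absolutelyContinuous_of_le (Measure.le_add_right le_rfl)
  have h2 : Q ≪ P + Q := Measure.absolutelyContinuous_of_le (Measure.le_add_left le_rfl)
  have h3 : P + Q ≪ ν := Measure.AbsolutelyContinuous.add_left hP hQ
  unfold hellingerSq
  rw [← integral_rnDeriv_smul h3]
  apply integral_congr_ae
  filter_upwards [Measure.rnDeriv_mul_rnDeriv (κ := ν) h1,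
    Measure.rnDeriv_mul_rnDeriv (κ := ν) h2] with x hx1 hx2
  rw [← hx1, ← hx2]
  simp only [Pi.mul_apply, ENNReal.toReal_mul, smul_eq_mul]
  rw [Real.sqrt_mul ENNReal.toReal_nonneg, Real.sqrt_mul ENNReal.toReal_nonneg, ← sub_mul, mul_pow,
    Real.sq_sqrt ENNReal.toReal_nonneg, mul_comm]

theorem hel_eq {Ω : Type*} [MeasurableSpace Ω] (P Q ν : Measure Ω)
    [IsProbabilityMeasure P] [IsProbabilityMeasure Q] [SigmaFinite ν] (hP : P ≪ ν) (hQ : Q ≪ ν) :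
    hellingerSq P Q = 2 - 2 * ∫ x, Real.sqrt ((P.rnDeriv ν x).toReal)
        * Real.sqrt ((Q.rnDeriv ν x).toReal) ∂ν := by
  rw [hel_change P Q ν hP hQ]
  have iP : Integrable (fun x => (P.rnDeriv ν x).toReal) ν := Measure.integrable_toReal_rnDeriv
  have iQ : Integrable (fun x => (Q.rnDeriv ν x).toReal) ν := Measure.integrable_toReal_rnDeriv
  have mP := (Measure.measurable_rnDeriv P ν).ennreal_toReal.sqrt
  have mQ := (Measure.measurable_rnDeriv Q ν).ennreal_toReal.sqrt
  have iPQ : Integrable (fun x => Real.sqrt ((P.rnDeriv ν x).toReal)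
        * Real.sqrt ((Q.rnDeriv ν x).toReal)) ν := by
    refine (iP.add iQ).mono' (mP.mul mQ).aestronglyMeasurable (ae_of_all _ fun x => ?_)
    have a := Real.sq_sqrt (ENNReal.toReal_nonneg (a := P.rnDeriv ν x))
    have b := Real.sq_sqrt (ENNReal.toReal_nonneg (a := Q.rnDeriv ν x))
    rw [Real.norm_of_nonneg (by positivity), Pi.add_apply]
    nlinarith [sq_nonneg (√(P.rnDeriv ν x).toReal - √(Q.rnDeriv ν x).toReal),
      sq_nonneg (√(P.rnDeriv ν x).toReal + √(Q.rnDeriv ν x).toReal)]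
  have e : ∀ x, (Real.sqrt ((P.rnDeriv ν x).toReal) - Real.sqrt ((Q.rnDeriv ν x).toReal)) ^ 2
      = (P.rnDeriv ν x).toReal + (Q.rnDeriv ν x).toReal
        - 2 * (Real.sqrt ((P.rnDeriv ν x).toReal) * Real.sqrt ((Q.rnDeriv ν x).toReal)) := by
    intro x
    have a := Real.sq_sqrt (ENNReal.toReal_nonneg (a := P.rnDeriv ν x))
    have b := Real.sq_sqrt (ENNReal.toReal_nonneg (a := Q.rnDeriv ν x))
    rw [sub_sq, a, b]; ring
  simp_rw [e]
  have iA : Integrable (fun x => (P.rnDeriv ν x).toReal + (Q.rnDeriv ν x).toReal) ν := iP.add iQ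
  rw [integral_sub iA (iPQ.const_mul 2), integral_add iP iQ, integral_const_mul,
    Measure.integral_toReal_rnDeriv hP, Measure.integral_toReal_rnDeriv hQ]
  simp only [probReal_univ]
  norm_num

theorem hel_pi {ι : Type*} [Fintype ι] {Ω : ι → Type*} [∀ i, MeasurableSpace (Ω i)]
    (P μ : ∀ i, Measure (Ω i)) [∀ i, IsProbabilityMeasure (P i)] [∀ i, IsFiniteMeasure (μ i)]
    (h : ∀ i, P i ≪ μ i) :
    Measure.pi P = (Measure.pi μ).withDensity
      (fun x => ENNReal.ofReal (∏ i, ((P i).rnDeriv (μ i) (x i)).toReal)) := by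
  apply Measure.pi_eq
  intro s hs
  have iP : ∀ i, Integrable (fun x => ((P i).rnDeriv (μ i) x).toReal) ((μ i).restrict (s i)) :=
    fun i => Measure.integrable_toReal_rnDeriv.restrict
  rw [withDensity_apply _ (MeasurableSet.univ_pi hs), Measure.restrict_pi_pi,
    ← ofReal_integral_eq_lintegral_ofReal (Integrable.fintype_prod_dep iP)
      (ae_of_all _ fun x => Finset.prod_nonneg fun i _ => ENNReal.toReal_nonneg),
    integral_fintype_prod_eq_prod (fun i x => ((P i).rnDeriv (μ i) x).toReal),
    ENNReal.ofReal_prod_of_nonneg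
      (fun i _ => integral_nonneg fun x => ENNReal.toReal_nonneg)]
  refine Finset.prod_congr rfl fun i _ => ?_
  rw [Measure.setIntegral_toReal_rnDeriv (h i)]
  simp

theorem hel_prod {ι : Type*} (s : Finset ι) (a : ι → ℝ) (h0 : ∀ i, 0 ≤ a i) (h1 : ∀ i, a i ≤ 1) :
    1 - ∏ i ∈ s, a i ≤ ∑ i ∈ s, (1 - a i) := by
  classical
  induction s using Finset.induction_on with
  | empty => simp
  | insert j s hj ih =>
    rw [Finset.prod_insert hj, Finset.sum_insert hj]
    have : ∏ i ∈ s, a i ≤ 1 := Finset.prod_le_one (fun i _ => h0 i) (fun i _ => h1 i)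
    nlinarith [mul_nonneg (sub_nonneg.2 (h1 j)) (sub_nonneg.2 this)]

/-- sub-additivity of the squared Hellinger distance under products:
`He²(⊗ᵢ Pᵢ, ⊗ᵢ Qᵢ) ≤ Σᵢ He²(Pᵢ, Qᵢ)`. -/
theorem hellingerSq_pi_le_sum
    {ι : Type*} [Fintype ι] {Ω : ι → Type*} [∀ i, MeasurableSpace (Ω i)]
    (P Q : ∀ i, Measure (Ω i))
    [∀ i, IsProbabilityMeasure (P i)] [∀ i, IsProbabilityMeasure (Q i)] :
    hellingerSq (Measure.pi P) (Measure.pi Q) ≤ ∑ i, hellingerSq (P i) (Q i) := by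

  have h1 : ∀ i, P i ≪ P i + Q i := fun i =>
    Measure.absolutelyContinuous_of_le (Measure.le_add_right le_rfl)
  have h2 : ∀ i, Q i ≪ P i + Q i := fun i =>
    Measure.absolutelyContinuous_of_le (Measure.le_add_left le_rfl)
  set μ : ∀ i, Measure (Ω i) := fun i => P i + Q i with hμ
  have eP := hel_pi P μ h1
  have eQ := hel_pi Q μ h2
  have m : ∀ R : ∀ i, Measure (Ω i), Measurable (fun x : ∀ i, Ω i =>
      ENNReal.ofReal (∏ i, ((R i).rnDeriv (μ i) (x i)).toReal)) := fun R =>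
    (Finset.measurable_fun_prod _ fun i _ => ((Measure.measurable_rnDeriv _ _).comp
      (measurable_pi_apply i)).ennreal_toReal).ennreal_ofReal
  have dP := Measure.rnDeriv_withDensity (Measure.pi μ) (m P)
  rw [← eP] at dP
  have dQ := Measure.rnDeriv_withDensity (Measure.pi μ) (m Q)
  rw [← eQ] at dQ
  have acP : Measure.pi P ≪ Measure.pi μ := by
    rw [eP]; exact withDensity_absolutelyContinuous _ _
  have acQ : Measure.pi Q ≪ Measure.pi μ := by
    rw [eQ]; exact withDensity_absolutelyContinuous _ _
  set a : ι → ℝ := fun i => ∫ x, Real.sqrt (((P i).rnDeriv (μ i) x).toReal)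
        * Real.sqrt (((Q i).rnDeriv (μ i) x).toReal) ∂(μ i) with ha
  have he : ∀ i, hellingerSq (P i) (Q i) = 2 - 2 * a i := fun i =>
    hel_eq (P i) (Q i) (μ i) (h1 i) (h2 i)
  have hpi : hellingerSq (Measure.pi P) (Measure.pi Q) = 2 - 2 * ∏ i, a i := by
    rw [hel_eq _ _ (Measure.pi μ) acP acQ, ha, ← integral_fintype_prod_eq_prod
      (fun i x => Real.sqrt (((P i).rnDeriv (μ i) x).toReal)
        * Real.sqrt (((Q i).rnDeriv (μ i) x).toReal))]
    congr 2
    apply integral_congr_ae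
    filter_upwards [dP, dQ] with x hx1 hx2
    rw [hx1, hx2, ENNReal.toReal_ofReal (Finset.prod_nonneg fun i _ => ENNReal.toReal_nonneg),
      ENNReal.toReal_ofReal (Finset.prod_nonneg fun i _ => ENNReal.toReal_nonneg),
      Real.sqrt_prod _ (fun i _ => ENNReal.toReal_nonneg),
      Real.sqrt_prod _ (fun i _ => ENNReal.toReal_nonneg), Finset.prod_mul_distrib]
  have a0 : ∀ i, 0 ≤ a i := fun i => integral_nonneg fun x => by positivity
  have a1 : ∀ i, a i ≤ 1 := fun i => by
    have : 0 ≤ hellingerSq (P i) (Q i) := integral_nonneg fun x => sq_nonneg _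
    rw [he] at this
    linarith
  have key := hel_prod Finset.univ a a0 a1
  have hs : ∑ i, hellingerSq (P i) (Q i) = 2 * ∑ i, (1 - a i) := by
    rw [Finset.mul_sum]
    exact Finset.sum_congr rfl fun i _ => by rw [he]; ring
  rw [hpi, hs]
  linarith
end

section
/- (Hellinger form of Assouad's lemma.) Let d ∈ ℕ, c ∈ [0,1], and let {P_θ : θ ∈ {−1,1}^d} be probability measures on an observation space O such that for some α(c) ≥ 0, He²(P_θ, P_{θ′}) ≤ α(c) whenever θ and θ′ differ in exactly one coordinate (ρ_Ha(θ, θ′) = 1). Then the minimax risk R*_{ρ_Ha} of estimating θ from n i.i.d. observations under Hamming loss (R*_{ρ_Ha} := inf over randomized estimators θ̂ of max over θ of E_{O ∼ P_θⁿ} E_{θ̃ ∼ θ̂(O)}[ρ_Ha(θ, θ̃)]) satisfies R*_{ρ_Ha} ≥ d · min(c, 1−c) · (1 − sqrt(α(c)·n)). -/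
open MeasureTheory ProbabilityTheory

lemma aux_pi_density {O : Type*} [MeasurableSpace O] (n : ℕ) (P μ : Measure O)
    [IsProbabilityMeasure P] [IsFiniteMeasure μ] (h : P ≪ μ) :
    (Measure.pi fun _ : Fin n => P) =
      (Measure.pi fun _ : Fin n => μ).withDensity
        (fun x => ENNReal.ofReal (∏ i, (P.rnDeriv μ (x i)).toReal)) := by
  apply Measure.pi_eq
  intro s hs
  rw [withDensity_apply _ (MeasurableSet.univ_pi hs), ← lintegral_indicator (MeasurableSet.univ_pi hs)]
  have e : (fun x : Fin n → O => (Set.univ.pi s).indicator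
      (fun x => ENNReal.ofReal (∏ i, (P.rnDeriv μ (x i)).toReal)) x)
      = fun x => ENNReal.ofReal (∏ i, (s i).indicator (fun y => (P.rnDeriv μ y).toReal) (x i)) := by
    funext x
    by_cases hx : x ∈ Set.univ.pi s
    · rw [Set.indicator_of_mem hx]
      congr 1
      refine Finset.prod_congr rfl fun i _ => ?_
      rw [Set.indicator_of_mem (hx i (Set.mem_univ i))]
    · rw [Set.indicator_of_notMem hx]
      simp only [Set.mem_pi, Set.mem_univ, true_imp_iff, not_forall] at hx
      obtain ⟨i, hi⟩ := hx
      rw [Finset.prod_eq_zero (Finset.mem_univ i) (Set.indicator_of_notMem hi _)]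
      simp
  rw [e, ← ofReal_integral_eq_lintegral_ofReal]
  · rw [integral_fintype_prod_eq_prod (fun i y => (s i).indicator (fun y => (P.rnDeriv μ y).toReal) y),
      ENNReal.ofReal_prod_of_nonneg]
    · refine Finset.prod_congr rfl fun i _ => ?_
      rw [integral_indicator (hs i), Measure.setIntegral_toReal_rnDeriv h]
      simp
    · intro i _
      exact integral_nonneg fun y => Set.indicator_nonneg (fun _ _ => ENNReal.toReal_nonneg) _
  · exact Integrable.fintype_prod (f := fun i => (s i).indicator (fun y => (P.rnDeriv μ y).toReal))
      fun i => Measure.integrable_toReal_rnDeriv.indicator (hs i)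
  · exact Filter.Eventually.of_forall fun x => Finset.prod_nonneg fun i _ =>
      Set.indicator_nonneg (fun _ _ => ENNReal.toReal_nonneg) _

lemma aux_pointwise (p q f s : ℝ) (hp : 0 ≤ p) (hq : 0 ≤ q) (hf0 : 0 ≤ f) (hf1 : f ≤ 1)
    (hs : 0 < s) :
    (p + q) / 2 - (1 / (2 * s)) * (p + q - 2 * √(p * q)) - (s / 4) * (p + q)
      ≤ p * f + q * (1 - f) := by
  rw [Real.sqrt_mul hp]
  obtain ⟨a, ha, rfl⟩ : ∃ a, 0 ≤ a ∧ a ^ 2 = p := ⟨√p, Real.sqrt_nonneg _, Real.sq_sqrt hp⟩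
  obtain ⟨b, hb, rfl⟩ : ∃ a, 0 ≤ a ∧ a ^ 2 = q := ⟨√q, Real.sqrt_nonneg _, Real.sq_sqrt hq⟩
  rw [Real.sqrt_sq ha, Real.sqrt_sq hb]
  have key : |a ^ 2 - b ^ 2| / 2 ≤ (1 / (2 * s)) * (a - b) ^ 2 + (s / 4) * (a ^ 2 + b ^ 2) := by
    have h1 : |a ^ 2 - b ^ 2| = |a - b| * (a + b) := by
      rw [show a ^ 2 - b ^ 2 = (a - b) * (a + b) by ring, abs_mul, abs_of_nonneg (add_nonneg ha hb)]
    have h2 : (1 / (2 * s)) * (a - b) ^ 2 + (s / 8) * (a + b) ^ 2 - |a - b| * (a + b) / 2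
        = (1 / (8 * s)) * (2 * |a - b| - s * (a + b)) ^ 2 := by
      rw [← sq_abs (a - b)]
      field_simp
      ring
    have h3 : 0 ≤ (1 / (8 * s)) * (2 * |a - b| - s * (a + b)) ^ 2 := by positivity
    have h4 : 0 ≤ s * (a - b) ^ 2 := by positivity
    rw [h1]
    nlinarith
  have h5 : a ^ 2 + b ^ 2 - 2 * (a * b) = (a - b) ^ 2 := by ring
  rw [h5]
  have h6 : (a ^ 2 + b ^ 2) / 2 - |a ^ 2 - b ^ 2| / 2 ≤ a ^ 2 * f + b ^ 2 * (1 - f) := by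
    rcases abs_cases (a ^ 2 - b ^ 2) with ⟨h, h'⟩ | ⟨h, h'⟩ <;> rw [h] <;> nlinarith
  linarith

lemma aux_key {O : Type*} [MeasurableSpace O] (n : ℕ) (μ : Measure O) [IsFiniteMeasure μ] (α : ℝ)
    (f : (Fin n → O) → ℝ) (hf : Measurable f)
    (hf0 : ∀ x, 0 ≤ f x) (hf1 : ∀ x, f x ≤ 1) (p q : O → ℝ) (mp : Measurable p) (mq : Measurable q)
    (ip : Integrable p μ) (iq : Integrable q μ)
    (Ip : ∫ y, p y ∂μ = 1) (Iq : ∫ y, q y ∂μ = 1) (p0 : ∀ y, 0 ≤ p y) (q0 : ∀ y, 0 ≤ q y)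
    (hHe : ∫ x, (√(p x) - √(q x)) ^ 2 ∂μ ≤ α) :
    1 - √(α * n) ≤ (∫ x, f x ∂((Measure.pi fun _ : Fin n => μ).withDensity
        (fun x => ENNReal.ofReal (∏ i, p (x i)))))
      + ∫ x, (1 - f x) ∂((Measure.pi fun _ : Fin n => μ).withDensity
        (fun x => ENNReal.ofReal (∏ i, q (x i)))) := by
  set ν := Measure.pi fun _ : Fin n => μ
  have P0 : ∀ x : Fin n → O, 0 ≤ ∏ i, p (x i) := fun x => Finset.prod_nonneg fun i _ => p0 _
  have Q0 : ∀ x : Fin n → O, 0 ≤ ∏ i, q (x i) := fun x => Finset.prod_nonneg fun i _ => q0 _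
  have IP : Integrable (fun x : Fin n → O => ∏ i, p (x i)) ν :=
    Integrable.fintype_prod (f := fun _ => p) fun _ => ip
  have IQ : Integrable (fun x : Fin n → O => ∏ i, q (x i)) ν :=
    Integrable.fintype_prod (f := fun _ => q) fun _ => iq
  have isq : Integrable (fun y => √(p y * q y)) μ := by
    refine (ip.add iq).mono' (by fun_prop) (Filter.Eventually.of_forall fun y => ?_)
    rw [Real.norm_of_nonneg (Real.sqrt_nonneg _)]
    refine Real.sqrt_le_iff.mpr ⟨add_nonneg (p0 y) (q0 y), ?_⟩
    simp only [Pi.add_apply]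
    nlinarith [p0 y, q0 y, mul_nonneg (p0 y) (q0 y)]
  have eB : ∀ x : Fin n → O, √((∏ i, p (x i)) * ∏ i, q (x i)) = ∏ i, √(p (x i) * q (x i)) := by
    intro x
    rw [← Finset.prod_mul_distrib, Real.sqrt_prod _ fun i _ => mul_nonneg (p0 _) (q0 _)]
  have IB : Integrable (fun x : Fin n → O => √((∏ i, p (x i)) * ∏ i, q (x i))) ν := by
    simp_rw [eB]
    exact Integrable.fintype_prod (f := fun _ y => √(p y * q y)) fun _ => isq
  have VP : ∫ x : Fin n → O, ∏ i, p (x i) ∂ν = 1 := by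
    rw [integral_fintype_prod_eq_pow p, Ip, one_pow]
  have VQ : ∫ x : Fin n → O, ∏ i, q (x i) ∂ν = 1 := by
    rw [integral_fintype_prod_eq_pow q, Iq, one_pow]
  have VB : ∫ x : Fin n → O, √((∏ i, p (x i)) * ∏ i, q (x i)) ∂ν = (∫ y, √(p y * q y) ∂μ) ^ n := by
    simp_rw [eB]
    rw [integral_fintype_prod_eq_pow (fun y => √(p y * q y)), Fintype.card_fin]
  have hb : 1 - α / 2 ≤ ∫ y, √(p y * q y) ∂μ := by
    have : ∫ x, (√(p x) - √(q x)) ^ 2 ∂μ = 2 - 2 * ∫ y, √(p y * q y) ∂μ := by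
      have e : ∀ x, (√(p x) - √(q x)) ^ 2 = p x + q x - 2 * √(p x * q x) := by
        intro x
        rw [Real.sqrt_mul (p0 x), sub_sq, Real.sq_sqrt (p0 x), Real.sq_sqrt (q0 x)]
        ring
      simp_rw [e]
      rw [integral_sub (f := fun x => p x + q x) (ip.add iq) (isq.const_mul 2), integral_add ip iq, integral_const_mul,
        Ip, Iq]
      norm_num
    linarith
  have hb0 : 0 ≤ ∫ y, √(p y * q y) ∂μ := integral_nonneg fun _ => Real.sqrt_nonneg _
  have hB : 1 - α * n / 2 ≤ (∫ y, √(p y * q y) ∂μ) ^ n := by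
    have := one_add_mul_le_pow (a := (∫ y, √(p y * q y) ∂μ) - 1) (by linarith) n
    rw [add_sub_cancel] at this
    have hn : (0:ℝ) ≤ n := Nat.cast_nonneg n
    nlinarith
  rw [← VB] at hB
  rw [integral_withDensity_eq_integral_toReal_smul (by fun_prop) (by simp),
    integral_withDensity_eq_integral_toReal_smul (by fun_prop) (by simp)]
  simp_rw [ENNReal.toReal_ofReal (P0 _), ENNReal.toReal_ofReal (Q0 _), smul_eq_mul]
  have I1 : Integrable (fun x : Fin n → O => (∏ i, p (x i)) * f x) ν :=
    IP.mul_bdd (c := 1) hf.aestronglyMeasurable (Filter.Eventually.of_forall fun x => by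
      rw [Real.norm_of_nonneg (hf0 x)]; exact hf1 x)
  have I2 : Integrable (fun x : Fin n → O => (∏ i, q (x i)) * (1 - f x)) ν :=
    IQ.mul_bdd (c := 1) (by fun_prop) (Filter.Eventually.of_forall fun x => by
      rw [Real.norm_of_nonneg (by linarith [hf1 x])]; linarith [hf0 x])
  rw [← integral_add I1 I2]
  have main : ∀ s, √(α * n) < s → 1 - s ≤
      ∫ x : Fin n → O, ((∏ i, p (x i)) * f x + (∏ i, q (x i)) * (1 - f x)) ∂ν := by
    intro s hs
    have s0 : 0 < s := (Real.sqrt_nonneg _).trans_lt hs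
    have hs2 : α * n ≤ s ^ 2 := (Real.sqrt_le_left s0.le).mp hs.le
    have := integral_mono (μ := ν)
      ((((IP.add IQ).div_const 2).sub
        (((IP.add IQ).sub (IB.const_mul 2)).const_mul (1 / (2 * s)))).sub
        ((IP.add IQ).const_mul (s / 4))) (I1.add I2)
      (fun x => aux_pointwise _ _ (f x) s (P0 x) (Q0 x) (hf0 x) (hf1 x) s0)
    refine le_trans ?_ this
    simp only [Pi.add_apply, Pi.sub_apply]
    rw [integral_sub, integral_sub, integral_div, integral_const_mul, integral_const_mul,
      integral_sub, integral_add IP IQ, integral_const_mul, VP, VQ]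
    · have : 1 / (2 * s) * (1 + 1 - 2 * ∫ x : Fin n → O, √((∏ i, p (x i)) * ∏ i, q (x i)) ∂ν)
          ≤ s / 2 := by
        rw [div_mul_eq_mul_div, div_le_iff₀ (by positivity)]
        nlinarith
      linarith
    · exact IP.add IQ
    · exact IB.const_mul 2
    · exact (IP.add IQ).div_const 2
    · exact ((IP.add IQ).sub (IB.const_mul 2)).const_mul _
    · exact ((IP.add IQ).div_const 2).sub
        (((IP.add IQ).sub (IB.const_mul 2)).const_mul (1 / (2 * s)))
    · exact (IP.add IQ).const_mul (s / 4)
  have : 1 - (∫ x : Fin n → O, ((∏ i, p (x i)) * f x + (∏ i, q (x i)) * (1 - f x)) ∂ν)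
      ≤ √(α * n) := le_of_forall_gt_imp_ge_of_dense fun s hs => by linarith [main s hs]
  linarith

lemma aux_test_mu {O : Type*} [MeasurableSpace O] (n : ℕ) (P Q μ : Measure O)
    [IsProbabilityMeasure P] [IsProbabilityMeasure Q] [IsFiniteMeasure μ] (hPμ : P ≪ μ) (hQμ : Q ≪ μ)
    (α : ℝ)
    (hHe : ∫ x, (Real.sqrt ((P.rnDeriv μ x).toReal)
        - Real.sqrt ((Q.rnDeriv μ x).toReal)) ^ 2 ∂μ ≤ α)
    (f : (Fin n → O) → ℝ) (hf : Measurable f)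
    (hf0 : ∀ x, 0 ≤ f x) (hf1 : ∀ x, f x ≤ 1) :
    1 - √(α * n) ≤ (∫ x, f x ∂(Measure.pi fun _ : Fin n => P))
      + ∫ x, (1 - f x) ∂(Measure.pi fun _ : Fin n => Q) := by
  rw [aux_pi_density n P μ hPμ, aux_pi_density n Q μ hQμ]
  have mp : Measurable fun y => (P.rnDeriv μ y).toReal := (Measure.measurable_rnDeriv P μ).ennreal_toReal
  have mq : Measurable fun y => (Q.rnDeriv μ y).toReal := (Measure.measurable_rnDeriv Q μ).ennreal_toReal
  have ip : Integrable (fun y => (P.rnDeriv μ y).toReal) μ := Measure.integrable_toReal_rnDeriv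
  have iq : Integrable (fun y => (Q.rnDeriv μ y).toReal) μ := Measure.integrable_toReal_rnDeriv
  have Ip : ∫ y, (P.rnDeriv μ y).toReal ∂μ = 1 := by
    rw [Measure.integral_toReal_rnDeriv hPμ]; simp
  have Iq : ∫ y, (Q.rnDeriv μ y).toReal ∂μ = 1 := by
    rw [Measure.integral_toReal_rnDeriv hQμ]; simp
  have p0 : ∀ y, 0 ≤ (P.rnDeriv μ y).toReal := fun _ => ENNReal.toReal_nonneg
  have q0 : ∀ y, 0 ≤ (Q.rnDeriv μ y).toReal := fun _ => ENNReal.toReal_nonneg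
  exact aux_key n μ α f hf hf0 hf1 (fun y => (P.rnDeriv μ y).toReal)
    (fun y => (Q.rnDeriv μ y).toReal) mp mq ip iq Ip Iq p0 q0 hHe

lemma aux_test {O : Type*} [MeasurableSpace O] (n : ℕ) (P Q : Measure O)
    [IsProbabilityMeasure P] [IsProbabilityMeasure Q] (α : ℝ)
    (hHe : hellingerSq P Q ≤ α) (f : (Fin n → O) → ℝ) (hf : Measurable f)
    (hf0 : ∀ x, 0 ≤ f x) (hf1 : ∀ x, f x ≤ 1) :
    1 - √(α * n) ≤ (∫ x, f x ∂(Measure.pi fun _ : Fin n => P))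
      + ∫ x, (1 - f x) ∂(Measure.pi fun _ : Fin n => Q) := by
  have hPμ : P ≪ P + Q := Measure.AbsolutelyContinuous.rfl.add_right Q
  have hQμ : Q ≪ P + Q := by
    rw [add_comm]; exact Measure.AbsolutelyContinuous.rfl.add_right P
  exact aux_test_mu n P Q (P + Q) hPμ hQμ α hHe f hf hf0 hf1

/-- Hellinger form of Assouad's lemma. If `He²(P_θ, P_{θ'}) ≤ α` whenever
`θ, θ' ∈ {−1,1}^d` (encoded as `Fin d → Bool`) differ in exactly one coordinate, then the
minimax risk under Hamming loss from `n` i.i.d. observations satisfies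
`R*_{ρ_Ha} ≥ d · min(c, 1−c) · (1 − √(α·n))`. -/
theorem assouad_hellinger_form
    {O : Type*} [MeasurableSpace O] (d n : ℕ)
    (P : (Fin d → Bool) → Measure O) [∀ θ, IsProbabilityMeasure (P θ)]
    (c : ℝ) (hc : c ∈ Set.Icc (0 : ℝ) 1)
    (α : ℝ) (hα : 0 ≤ α)
    (hHe : ∀ θ θ' : Fin d → Bool, hammingDist θ θ' = 1 → hellingerSq (P θ) (P θ') ≤ α) :
    (⨅ κ : {κ : Kernel (Fin n → O) (Fin d → Bool) // IsMarkovKernel κ},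
      ⨆ θ : Fin d → Bool,
        ∫ o, (∫ t, (hammingDist θ t : ℝ) ∂(κ.1 o)) ∂(Measure.pi fun _ : Fin n => P θ))
    ≥ d * min c (1 - c) * (1 - Real.sqrt (α * n)) := by
  have hne : Nonempty {κ : Kernel (Fin n → O) (Fin d → Bool) // IsMarkovKernel κ} :=
    ⟨⟨Kernel.const _ (Measure.dirac fun _ => true), inferInstance⟩⟩
  refine le_ciInf ?_
  rintro ⟨κ, hκ⟩
  dsimp only
  set u : (Fin d → Bool) → Fin d → (Fin n → O) → ℝ := fun θ i o => (κ o).real {t | θ i ≠ t i} with hu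
  have mu : ∀ θ i, Measurable (u θ i) := fun θ i =>
    (Kernel.measurable_coe κ (Set.to_countable _).measurableSet).ennreal_toReal
  have u0 : ∀ θ i o, 0 ≤ u θ i o := fun _ _ _ => measureReal_nonneg
  have u1 : ∀ θ i o, u θ i o ≤ 1 := fun _ _ _ => measureReal_le_one
  have iu : ∀ θ i, Integrable (u θ i) (Measure.pi fun _ : Fin n => P θ) := fun θ i =>
    Integrable.of_bound (mu θ i).aestronglyMeasurable 1 (Filter.Eventually.of_forall fun o => by
      rw [Real.norm_of_nonneg (u0 θ i o)]; exact u1 θ i o)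
  have inner : ∀ θ o, ∫ t, (hammingDist θ t : ℝ) ∂(κ o) = ∑ i, u θ i o := by
    intro θ o
    have e : ∀ t : Fin d → Bool, (hammingDist θ t : ℝ)
        = ∑ i, ({t | θ i ≠ t i} : Set (Fin d → Bool)).indicator (fun _ => (1:ℝ)) t := by
      intro t
      rw [hammingDist, Finset.card_filter, Nat.cast_sum]
      refine Finset.sum_congr rfl fun i _ => ?_
      by_cases h : θ i = t i <;> simp [h]
    simp_rw [e]
    rw [integral_finsetSum _ fun i _ => Integrable.of_finite]
    refine Finset.sum_congr rfl fun i _ => ?_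
    rw [integral_indicator_const _ (Set.to_countable _).measurableSet]
    simp [hu]
  simp_rw [inner]
  have outer : ∀ θ, ∫ o, ∑ i, u θ i o ∂(Measure.pi fun _ : Fin n => P θ)
      = ∑ i, ∫ o, u θ i o ∂(Measure.pi fun _ : Fin n => P θ) := fun θ =>
    integral_finsetSum _ fun i _ => iu θ i
  simp_rw [outer]
  set R : (Fin d → Bool) → Fin d → ℝ := fun θ i => ∫ o, u θ i o ∂(Measure.pi fun _ : Fin n => P θ) with hR
  have R0 : ∀ θ i, 0 ≤ R θ i := fun θ i => integral_nonneg (u0 θ i)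
  set L := 1 - √(α * n) with hL
  let F : Fin d → (Fin d → Bool) → (Fin d → Bool) := fun i θ => Function.update θ i (!(θ i))
  have FF : ∀ i, Function.Involutive (F i) := by
    intro i θ
    simp [F]
  have pair : ∀ θ i, L ≤ R θ i + R (F i θ) i := by
    intro θ i
    have hd : hammingDist θ (F i θ) = 1 := by
      rw [hammingDist, Finset.card_eq_one]
      refine ⟨i, ?_⟩
      ext j
      by_cases h : j = i
      · subst h; simp [F]
      · simp [F, h]
    have h := aux_test n (P θ) (P (F i θ)) α (hHe _ _ hd) (u θ i) (mu θ i) (u0 θ i) (u1 θ i)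
    have e : ∀ o, u (F i θ) i o = 1 - u θ i o := by
      intro o
      simp only [hu]
      rw [← probReal_compl_eq_one_sub (Set.to_countable _).measurableSet]
      congr 1
      ext t
      simp only [F, Function.update_self, Set.mem_ofPred_eq, Set.mem_compl_iff]
      cases θ i <;> cases t i <;> simp
    simp only [hR]
    simp_rw [e]
    exact h
  have sumi : ∀ i, (2:ℝ) ^ d * (L / 2) ≤ ∑ θ, R θ i := by
    intro i
    have h1 : ∑ θ, R (F i θ) i = ∑ θ, R θ i :=
      Equiv.sum_comp (FF i).toPerm (fun θ => R θ i)
    have h2 : ∑ _θ : Fin d → Bool, L ≤ ∑ θ, (R θ i + R (F i θ) i) :=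
      Finset.sum_le_sum fun θ _ => pair θ i
    rw [Finset.sum_add_distrib, h1] at h2
    simp at h2
    linarith
  have bdd : BddAbove (Set.range fun θ => ∑ i, R θ i) := (Set.finite_range _).bddAbove
  have sup_ge : ∀ θ, ∑ i, R θ i ≤ ⨆ θ, ∑ i, R θ i := fun θ => le_ciSup bdd θ
  have main : d * (L / 2) ≤ ⨆ θ, ∑ i, R θ i := by
    have h1 : ∑ θ, ∑ i, R θ i ≤ ∑ _θ : Fin d → Bool, ⨆ θ, ∑ i, R θ i :=
      Finset.sum_le_sum fun θ _ => sup_ge θ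
    rw [Finset.sum_comm] at h1
    have h2 : ∑ _i : Fin d, (2:ℝ) ^ d * (L / 2) ≤ ∑ i, ∑ θ, R θ i :=
      Finset.sum_le_sum fun i _ => sumi i
    have h3 := h2.trans h1
    simp at h3
    have : (2:ℝ) ^ d * (d * (L / 2)) ≤ 2 ^ d * ⨆ θ, ∑ i, R θ i := by linarith
    exact le_of_mul_le_mul_left this (by positivity)
  have nn : 0 ≤ ⨆ θ, ∑ i, R θ i :=
    (Finset.sum_nonneg fun i _ => R0 (fun _ => true) i).trans (sup_ge fun _ => true)
  have m0 : 0 ≤ min c (1 - c) := le_min hc.1 (by linarith [hc.2])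
  have m1 : min c (1 - c) ≤ 1 / 2 := by
    rcases le_total c (1 / 2) with h | h
    · exact (min_le_left _ _).trans h
    · exact (min_le_right _ _).trans (by linarith)
  have hd0 : (0:ℝ) ≤ d := Nat.cast_nonneg d
  rcases le_total 0 L with h | h
  · refine le_trans ?_ main
    have : (d:ℝ) * min c (1 - c) * L ≤ d * (1 / 2) * L := by gcongr
    linarith
  · exact (mul_nonpos_of_nonneg_of_nonpos (mul_nonneg hd0 m0) h).trans nn
end

section
/- (Hellinger distance between the hard instances.) Fix c ∈ (0,1), h ∈ [0, min(c,1−c)], V ≥ 2, p ∈ [0, 1/(V−1)], and distinct points x_1, …, x_V in X. For b ∈ {−1,1}^{V−1} let P_b be the distribution on X × {−1,1} with marginal P_b[X = x_i] = p for i ≤ V−1, P_b[X = x_V] = 1 − (V−1)p, and posterior η_b(x_i) = c − h if b_i = −1, η_b(x_i) = c + h if b_i = 1 (for i ≤ V−1), and η_b(x_V) = 0. Then for any b, b′ ∈ {−1,1}^{V−1}, He²(P_b, P_{b′}) = 2p·(1 − sqrt(c² − h²) − sqrt((1−c)² − h²))·ρ_Ha(b, b′). -/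
open MeasureTheory

/-- The hard instance `P_b` on `X × {−1,1}` (labels encoded by `Bool`, `true ↔ 1`): with
`V = m + 1` points `x 0, …, x m`, the `X`-marginal puts mass `p` on each `x i`, `i < m`,
and mass `1 − m·p` on `x m`; the posterior is `η_b(x i) = c + h·b i` (i.e. `c + h` when
`b i = 1`, `c − h` when `b i = −1`) for `i < m`, and `η_b(x m) = 0`. -/
noncomputable def hardP {X : Type*} [MeasurableSpace X] (m : ℕ) (x : Fin (m + 1) → X)
    (p c h : ℝ) (b : Fin m → Bool) : Measure (X × Bool) :=
  (∑ i : Fin m,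
      (ENNReal.ofReal (p * (c + h * (if b i then 1 else -1)))
          • Measure.dirac (x i.castSucc, true)
        + ENNReal.ofReal (p * (1 - (c + h * (if b i then 1 else -1))))
          • Measure.dirac (x i.castSucc, false)))
    + ENNReal.ofReal (1 - m * p) • Measure.dirac (x (Fin.last m), false)

theorem hellingerSq_discrete {Ω ι : Type*} [MeasurableSpace Ω] [MeasurableSingletonClass Ω]
    [Fintype ι] (y : ι → Ω) (hy : Function.Injective y) (f g : ι → ℝ)
    (hf : ∀ i, 0 ≤ f i) (hg : ∀ i, 0 ≤ g i) (P Q : Measure Ω)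
    (hP : P = ∑ i, ENNReal.ofReal (f i) • Measure.dirac (y i))
    (hQ : Q = ∑ i, ENNReal.ofReal (g i) • Measure.dirac (y i)) :
    hellingerSq P Q = ∑ i, (Real.sqrt (f i) - Real.sqrt (g i)) ^ 2 := by
  classical
  have key : ∀ (u : ι → ℝ) (j : ι), 
      (∑ i, ENNReal.ofReal (u i) • Measure.dirac (y i)) {y j} = ENNReal.ofReal (u j) := by
    intro u j
    rw [Measure.finsetSum_apply, Finset.sum_eq_single j]
    · simp
    · intro i _ hij
      have : y i ≠ y j := fun h => hij (hy h)
      simp [this]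
    · simp
  have hS : P + Q = ∑ i, ENNReal.ofReal (f i + g i) • Measure.dirac (y i) := by
    rw [hP, hQ, ← Finset.sum_add_distrib]
    refine Finset.sum_congr rfl fun i _ => ?_
    rw [ENNReal.ofReal_add (hf i) (hg i), add_smul]
  have fin : ∀ u : ι → ℝ, IsFiniteMeasure (∑ i, ENNReal.ofReal (u i) • Measure.dirac (y i)) := by
    intro u
    refine ⟨?_⟩
    rw [Measure.finsetSum_apply]
    simp
  haveI : IsFiniteMeasure P := hP ▸ fin f
  haveI : IsFiniteMeasure Q := hQ ▸ fin g
  have rn : ∀ (R : Measure Ω) (u : ι → ℝ), (∀ i, 0 ≤ u i) → IsFiniteMeasure R → R ≪ P + Q →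
      R = ∑ i, ENNReal.ofReal (u i) • Measure.dirac (y i) → ∀ j,
      (R.rnDeriv (P + Q) (y j)).toReal * (f j + g j) = u j := by
    intro R u hu hR hac hRe j
    have h1 := Measure.withDensity_rnDeriv_eq R (P + Q) hac
    have h2 : ((P + Q).withDensity (R.rnDeriv (P + Q))) {y j} = R {y j} := by rw [h1]
    rw [withDensity_apply _ (measurableSet_singleton _), lintegral_singleton] at h2
    have h3 : (P + Q) {y j} = ENNReal.ofReal (f j + g j) := by rw [hS]; exact key _ j
    have h4 : R {y j} = ENNReal.ofReal (u j) := by rw [hRe]; exact key _ j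
    rw [h3, h4] at h2
    have h5 := congrArg ENNReal.toReal h2
    rwa [ENNReal.toReal_mul, ENNReal.toReal_ofReal (add_nonneg (hf j) (hg j)),
      ENNReal.toReal_ofReal (hu j)] at h5
  have rP := rn P f hf inferInstance (Measure.absolutelyContinuous_of_le 
    (Measure.le_add_right le_rfl)) hP
  have rQ := rn Q g hg inferInstance (Measure.absolutelyContinuous_of_le 
    (Measure.le_add_left le_rfl)) hQ
  unfold hellingerSq
  generalize hA : P.rnDeriv (P + Q) = A at *
  generalize hB : Q.rnDeriv (P + Q) = B at *
  rw [hS, integral_finsetSum_measure]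
  · refine Finset.sum_congr rfl fun i _ => ?_
    have h0 := add_nonneg (hf i) (hg i)
    have sA : √(f i) = √(A (y i)).toReal * √(f i + g i) := by
      rw [← Real.sqrt_mul ENNReal.toReal_nonneg, rP i]
    have sB : √(g i) = √(B (y i)).toReal * √(f i + g i) := by
      rw [← Real.sqrt_mul ENNReal.toReal_nonneg, rQ i]
    rw [integral_smul_measure, integral_dirac, ENNReal.toReal_ofReal h0, sA, sB,
      ← sub_mul, mul_pow, Real.sq_sqrt h0, smul_eq_mul, mul_comm]
  · intro i _
    exact (integrable_dirac (by simp)).smul_measure (by simp)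

theorem hardP_point (c h p : ℝ) (hc : c ∈ Set.Ioo (0 : ℝ) 1)
    (hh0 : 0 ≤ h) (hh1 : h ≤ min c (1 - c)) (hp0 : 0 ≤ p) (s t : Bool) :
    (Real.sqrt (p * (c + h * (if s then 1 else -1))) 
      - Real.sqrt (p * (c + h * (if t then 1 else -1)))) ^ 2 + 
    (Real.sqrt (p * (1 - (c + h * (if s then 1 else -1)))) 
      - Real.sqrt (p * (1 - (c + h * (if t then 1 else -1))))) ^ 2 
     = 2 * p * (1 - Real.sqrt (c ^ 2 - h ^ 2) - Real.sqrt ((1 - c) ^ 2 - h ^ 2)) *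
       (if s ≠ t then 1 else 0) := by
  have h1 : 0 ≤ c - h := by linarith [min_le_left c (1 - c)]
  have h2 : 0 ≤ 1 - c - h := by linarith [min_le_right c (1 - c)]
  have h3 : 0 ≤ c + h := by linarith
  have h4 : 0 ≤ 1 - c + h := by linarith
  have e1 : Real.sqrt (c ^ 2 - h ^ 2) = Real.sqrt (c + h) * Real.sqrt (c - h) := by
    rw [← Real.sqrt_mul h3]; ring_nf
  have e2 : Real.sqrt ((1 - c) ^ 2 - h ^ 2) = Real.sqrt (1 - c + h) * Real.sqrt (1 - c - h) := by
    rw [← Real.sqrt_mul h4]; ring_nf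
  have a1 : c + h * 1 = c + h := by ring
  have a2 : c + h * (-1) = c - h := by ring
  have a3 : 1 - (c + h) = 1 - c - h := by ring
  have a4 : 1 - (c - h) = 1 - c + h := by ring
  have q1 := Real.sq_sqrt h1
  have q2 := Real.sq_sqrt h2
  have q3 := Real.sq_sqrt h3
  have q4 := Real.sq_sqrt h4
  have q5 := Real.sq_sqrt hp0
  rw [e1, e2]
  cases s <;> cases t <;> simp only [if_true, if_false, a1, a2, a3, a4, Real.sqrt_mul hp0, sub_self,
    Bool.false_eq_true, ne_eq, not_true_eq_false, not_false_eq_true, reduceCtorEq] <;> 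
    generalize √(c - h) = A at * <;> generalize √(c + h) = B at * <;>
    generalize √(1 - c - h) = C at * <;> generalize √(1 - c + h) = D at * <;>
    generalize √p = E at *
  · ring
  · subst q5; linear_combination E^2 * (q1 + q2 + q3 + q4)
  · subst q5; linear_combination E^2 * (q1 + q2 + q3 + q4)
  · ring

noncomputable def hardW (m : ℕ) (p c h : ℝ) (b : Fin m → Bool) (z : Fin (m + 1) × Bool) : ℝ :=
  Fin.lastCases (motive := fun _ => ℝ) (if z.2 then 0 else 1 - m * p)
    (fun i => if z.2 then p * (c + h * (if b i then 1 else -1)) 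
      else p * (1 - (c + h * (if b i then 1 else -1)))) z.1

theorem hardP_eq {X : Type*} [MeasurableSpace X] (m : ℕ) (x : Fin (m + 1) → X)
    (p c h : ℝ) (b : Fin m → Bool) :
    hardP m x p c h b = ∑ z : Fin (m + 1) × Bool, 
      ENNReal.ofReal (hardW m p c h b z) • Measure.dirac (x z.1, z.2) := by
  rw [Fintype.sum_prod_type, Fin.sum_univ_castSucc]
  simp [hardP, hardW]

theorem hardW_nonneg (m : ℕ) (hm : 1 ≤ m) (c h p : ℝ) (hc : c ∈ Set.Ioo (0 : ℝ) 1)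
    (hh0 : 0 ≤ h) (hh1 : h ≤ min c (1 - c))
    (hp0 : 0 ≤ p) (hp1 : p ≤ 1 / m) (b : Fin m → Bool) (z) : 0 ≤ hardW m p c h b z := by
  have h1 : 0 ≤ c - h := by linarith [min_le_left c (1 - c)]
  have h2 : 0 ≤ 1 - c - h := by linarith [min_le_right c (1 - c)]
  have hm' : (0 : ℝ) < m := by exact_mod_cast hm
  have h3 : 0 ≤ 1 - m * p := by
    rw [le_div_iff₀ hm'] at hp1; linarith
  obtain ⟨i, t⟩ := z
  induction i using Fin.lastCases with
  | last => cases t <;> simp [hardW] <;> linarith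
  | cast i =>
    cases t <;> simp only [hardW, Fin.lastCases_castSucc, if_true, Bool.false_eq_true, if_false] <;>
      apply mul_nonneg hp0 <;> split_ifs <;> linarith

/-- Hellinger distance between the hard instances:
`He²(P_b, P_{b'}) = 2p·(1 − √(c² − h²) − √((1−c)² − h²))·ρ_Ha(b, b')`. -/
theorem hellingerSq_hardP
    {X : Type*} [MeasurableSpace X] [MeasurableSingletonClass X]
    (m : ℕ) (hm : 1 ≤ m) (x : Fin (m + 1) → X) (hx : Function.Injective x)
    (c h p : ℝ) (hc : c ∈ Set.Ioo (0 : ℝ) 1)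
    (hh0 : 0 ≤ h) (hh1 : h ≤ min c (1 - c))
    (hp0 : 0 ≤ p) (hp1 : p ≤ 1 / m)
    (b b' : Fin m → Bool) :
    hellingerSq (hardP m x p c h b) (hardP m x p c h b')
      = 2 * p * (1 - Real.sqrt (c ^ 2 - h ^ 2) - Real.sqrt ((1 - c) ^ 2 - h ^ 2))
          * (hammingDist b b' : ℝ) := by
  have inj : Function.Injective (fun z : Fin (m + 1) × Bool => (x z.1, z.2)) := by
    rintro ⟨i, s⟩ ⟨j, t⟩ hij
    simp only [Prod.mk.injEq] at hij
    exact Prod.ext (hx hij.1) hij.2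
  rw [hellingerSq_discrete _ inj _ _ (hardW_nonneg m hm c h p hc hh0 hh1 hp0 hp1 b)
    (hardW_nonneg m hm c h p hc hh0 hh1 hp0 hp1 b') _ _ (hardP_eq m x p c h b)
    (hardP_eq m x p c h b'), Fintype.sum_prod_type, Fin.sum_univ_castSucc]
  simp only [hardW, Fin.lastCases_castSucc, Fin.lastCases_last, Fintype.sum_bool, if_true,
    Bool.false_eq_true, if_false, hardP_point c h p hc hh0 hh1 hp0, sub_self]
  rw [← Finset.mul_sum, Finset.sum_boole]
  simp [hammingDist]
end

section
/- For every c ∈ (0,1) and every h with 0 ≤ h ≤ min(c, 1−c), one has 1 − sqrt(c² − h²) − sqrt((1−c)² − h²) ≤ 2·h² / min(c, 1−c). -/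
theorem aux_sqrt (a h m : ℝ) (hm : 0 < m) (hma : m ≤ a) (hh0 : 0 ≤ h) (hh : h ≤ m) :
    a - h ^ 2 / m ≤ Real.sqrt (a ^ 2 - h ^ 2) := by
  have ha : 0 < a := lt_of_lt_of_le hm hma
  have h1 : h ^ 2 / a ≤ h ^ 2 / m := by gcongr
  have h2 : a - h ^ 2 / a ≤ Real.sqrt (a ^ 2 - h ^ 2) := by
    apply Real.le_sqrt_of_sq_le
    have hq : h ^ 2 / a * a = h ^ 2 := by field_simp
    have hq0 : 0 ≤ h ^ 2 / a := by positivity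
    have hqa : h ^ 2 / a ≤ a := by
      rw [div_le_iff₀ ha]
      nlinarith
    nlinarith [mul_nonneg hq0 (sub_nonneg.2 hqa)]
  linarith

/-- for `c ∈ (0,1)` and `0 ≤ h ≤ min(c, 1−c)`,
`1 − √(c² − h²) − √((1−c)² − h²) ≤ 2h²/min(c, 1−c)`. -/
theorem one_sub_sqrt_sub_sqrt_le
    (c h : ℝ) (hc : c ∈ Set.Ioo (0 : ℝ) 1) (hh0 : 0 ≤ h) (hh1 : h ≤ min c (1 - c)) :
    1 - Real.sqrt (c ^ 2 - h ^ 2) - Real.sqrt ((1 - c) ^ 2 - h ^ 2)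
      ≤ 2 * h ^ 2 / min c (1 - c) := by
  have hm : 0 < min c (1 - c) := lt_min hc.1 (by linarith [hc.2])
  have h1 := aux_sqrt c h _ hm (min_le_left _ _) hh0 hh1
  have h2 := aux_sqrt (1 - c) h _ hm (min_le_right _ _) hh0 hh1
  rw [mul_div_assoc]
  linarith
end

section
/- (Minimax lower bound for cost-sensitive classification.) Fix c ∈ (0,1) and write c̄ := 1−c. Let F be a class of measurable functions X → {−1,1} with VC dimension V ≥ 2, let h ∈ [0, min(c, c̄)], and let Θ_{h,F} be the set of joint distributions P_θ of (X,Y) on X × {−1,1} whose cost-sensitive Bayes classifier f*_θ (given by f*_θ(x) = 1 if η_θ(x) ≥ c, else −1) agrees with some member of F, and whose posterior satisfies |η_θ(X) − c| ≥ h almost surely. Then there exists an absolute constant K > 0 such that for any n ≥ V, the minimax regret risk R* := inf over learning rules f̂ (Markov kernels from (X × {−1,1})ⁿ to F) of sup over θ ∈ Θ_{h,F} of E_{S ∼ P_θⁿ} E_{f ∼ f̂(S)}[ er_{d_c}(f, P_θ) − er_{d_c}(f*_θ, P_θ) ] satisfies R* ≥ K · min(c, c̄) · min( sqrt(min(c,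 c̄)·V / n), min(c, c̄)·V / (n·h) ). -/
open MeasureTheory ProbabilityTheory

/-- The joint distribution of `(X, Y)` on `X × {−1,1}` (labels encoded by `Bool`, with
`true ↔ 1` and `false ↔ −1`) with `X`-marginal `M` and posterior `η(x) = P[Y = 1 ∣ X = x]`. -/
noncomputable def joint {X : Type*} [MeasurableSpace X] (M : Measure X) (η : X → ℝ) :
    Measure (X × Bool) :=
  (M.withDensity fun x => ENNReal.ofReal (η x)).map (fun x => (x, true))
    + (M.withDensity fun x => ENNReal.ofReal (1 - η x)).map (fun x => (x, false))

/-- The cost-sensitive error function `d_c(y, ŷ) = 1[ŷ ≠ y]·((1−c)·1[y = 1] + c·1[y = −1])`. -/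
noncomputable def dcost (c y yhat : ℝ) : ℝ :=
  (if yhat = y then 0 else 1) * ((1 - c) * (if y = 1 then 1 else 0) + c * (if y = -1 then 1 else 0))

/-- The cost-sensitive generalization error `er_{d_c}(f, D) = E_{(X,Y)∼D}[d_c(Y, f(X))]`. -/
noncomputable def er {X : Type*} [MeasurableSpace X] (c : ℝ) (f : X → ℝ)
    (D : Measure (X × Bool)) : ℝ :=
  ∫ z, dcost c (if z.2 then 1 else -1) (f z.1) ∂D

/-- `F` shatters the finite set `s`: every `{−1,1}`-sign pattern on `s` is realized by
some member of `F`. -/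
def Shatters {X : Type*} (F : Set (X → ℝ)) (s : Finset X) : Prop :=
  ∀ σ : X → Bool, ∃ f ∈ F, ∀ x ∈ s, f x = if σ x then 1 else -1

/-- `F` has VC dimension `V`: some set of `V` points is shattered, and every shattered
finite set has at most `V` points. -/
def VCdim {X : Type*} (F : Set (X → ℝ)) (V : ℕ) : Prop :=
  (∃ s : Finset X, s.card = V ∧ Shatters F s) ∧ ∀ s : Finset X, Shatters F s → s.card ≤ V

noncomputable def ee (c h : ℝ) (b : Bool) : ℝ := if b then c + h else c - h

noncomputable def qq {V : ℕ} (w : Fin V → ℝ) (c h : ℝ) (σ : Fin V → Bool) (t : Fin V × Bool) : ℝ :=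
  w t.1 * (if t.2 then ee c h (σ t.1) else 1 - ee c h (σ t.1))

lemma sqrt_lower (a h : ℝ) (ha : 0 < a) (h0 : 0 ≤ h) (hh : h ≤ a) :
    a - h ^ 2 / a ≤ Real.sqrt ((a + h) * (a - h)) := by
  apply Real.le_sqrt_of_sq_le
  have e : a - h ^ 2 / a = (a ^ 2 - h ^ 2) / a := by field_simp
  rw [e, div_pow, div_le_iff₀ (by positivity)]
  have h1 : 0 ≤ a ^ 2 - h ^ 2 := by nlinarith
  nlinarith [mul_nonneg h1 (sq_nonneg h)]

lemma sum_min_lower {T : Type*} [Fintype T] (P Q : T → ℝ) (hP : ∀ t, 0 ≤ P t) (hQ : ∀ t, 0 ≤ Q t)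
    (sP : ∑ t, P t = 1) (sQ : ∑ t, Q t = 1) :
    (∑ t, Real.sqrt (P t * Q t)) ^ 2 ≤ 2 * ∑ t, min (P t) (Q t) := by
  have h1 : ∀ t, Real.sqrt (P t * Q t) = Real.sqrt (min (P t) (Q t)) * Real.sqrt (max (P t) (Q t)) := by
    intro t
    rw [← Real.sqrt_mul (le_min (hP t) (hQ t)), min_mul_max]
  simp_rw [h1]
  refine (Finset.sum_mul_sq_le_sq_mul_sq _ _ _).trans ?_
  have h2 : ∀ t, Real.sqrt (min (P t) (Q t)) ^ 2 = min (P t) (Q t) := fun t =>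
    Real.sq_sqrt (le_min (hP t) (hQ t))
  have h3 : ∀ t, Real.sqrt (max (P t) (Q t)) ^ 2 = max (P t) (Q t) := fun t =>
    Real.sq_sqrt ((hP t).trans (le_max_left _ _))
  simp_rw [h2, h3]
  have h4 : ∑ t, max (P t) (Q t) ≤ 2 := by
    calc ∑ t, max (P t) (Q t) ≤ ∑ t, (P t + Q t) :=
          Finset.sum_le_sum fun t _ => max_le (by linarith [hQ t]) (by linarith [hP t])
      _ = 2 := by rw [Finset.sum_add_distrib, sP, sQ]; norm_num
  have h5 : 0 ≤ ∑ t, min (P t) (Q t) := Finset.sum_nonneg fun t _ => le_min (hP t) (hQ t)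
  nlinarith

lemma ee_mem (c h : ℝ) (h0 : 0 ≤ h) (hc : h ≤ c) (hc' : h ≤ 1 - c) (b : Bool) :
    0 ≤ ee c h b ∧ ee c h b ≤ 1 := by
  cases b <;> simp [ee] <;> constructor <;> linarith

lemma qq_nonneg {V : ℕ} (w : Fin V → ℝ) (hw : ∀ i, 0 ≤ w i) (c h : ℝ) (h0 : 0 ≤ h) (hc : h ≤ c)
    (hc' : h ≤ 1 - c) (σ : Fin V → Bool) (t) : 0 ≤ qq w c h σ t := by
  have := ee_mem c h h0 hc hc' (σ t.1)
  unfold qq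
  apply mul_nonneg (hw _)
  split_ifs <;> linarith

lemma qq_sum {V : ℕ} (w : Fin V → ℝ) (sw : ∑ i, w i = 1) (c h : ℝ) (σ : Fin V → Bool) :
    ∑ t, qq w c h σ t = 1 := by
  rw [Fintype.sum_prod_type, ← sw]
  refine Finset.sum_congr rfl fun i _ => ?_
  simp [qq]; ring

lemma sum_pi {T : Type*} [Fintype T] (n : ℕ) (f : T → ℝ) :
    ∑ z : Fin n → T, ∏ i, f (z i) = (∑ t, f t) ^ n := by
  classical
  have := Finset.prod_univ_sum (fun _ : Fin n => (Finset.univ : Finset T)) (fun _ t => f t)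
  rw [Fintype.piFinset_univ] at this
  rw [← this]; simp

lemma bc_lower {V : ℕ} (w : Fin V → ℝ) (hw : ∀ i, 0 ≤ w i) (sw : ∑ i, w i = 1) (c h : ℝ)
    (h0 : 0 < h) (hc : h ≤ c) (hc' : h ≤ 1 - c) (σ : Fin V → Bool) (x : Fin V) :
    1 - w x * (h ^ 2 / c + h ^ 2 / (1 - c)) ≤
      ∑ t, Real.sqrt (qq w c h σ t * qq w c h (Function.update σ x (!σ x)) t) := by
  rw [Fintype.sum_prod_type]
  have key : ∀ i, w i - (if i = x then w x * (h ^ 2 / c + h ^ 2 / (1 - c)) else 0) ≤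
      ∑ b : Bool, Real.sqrt (qq w c h σ (i, b) * qq w c h (Function.update σ x (!σ x)) (i, b)) := by
    intro i
    have a1 := sqrt_lower c h (by linarith) h0.le hc
    have a2 := sqrt_lower (1 - c) h (by linarith) h0.le hc'
    rw [Fintype.sum_bool]
    by_cases hi : i = x
    · subst hi
      simp only [if_true, qq, Function.update_self]
      have e1 : ∀ p q : ℝ, w i * p * (w i * q) = (w i) ^ 2 * (p * q) := fun p q => by ring
      have b1 : ee c h (σ i) * ee c h (!σ i) = (c + h) * (c - h) := by
        cases σ i <;> simp [ee]; ring
      have b2 : (1 - ee c h (σ i)) * (1 - ee c h (!σ i)) = (1 - c + h) * (1 - c - h) := by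
        cases σ i <;> simp [ee] <;> ring
      simp only [e1, Bool.false_eq_true, if_false, b1, b2]
      rw [Real.sqrt_mul (sq_nonneg _), Real.sqrt_mul (sq_nonneg _), Real.sqrt_sq (hw i), ← mul_add]
      nlinarith [hw i]
    · have e : ∀ b, Real.sqrt (qq w c h σ (i, b) * qq w c h (Function.update σ x (!σ x)) (i, b))
          = qq w c h σ (i, b) := by
        intro b
        have : qq w c h (Function.update σ x (!σ x)) (i, b) = qq w c h σ (i, b) := by
          simp [qq, Function.update_of_ne hi]
        rw [this, Real.sqrt_mul_self (qq_nonneg w hw c h h0.le hc hc' _ _)]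
      rw [e, e]
      simp [hi, qq]
      linarith
  refine le_trans (le_of_eq ?_) (Finset.sum_le_sum fun i _ => key i)
  rw [Finset.sum_sub_distrib, sw]; simp

lemma pair_lower {V : ℕ} (n : ℕ) (w : Fin V → ℝ) (hw : ∀ i, 0 ≤ w i) (sw : ∑ i, w i = 1) (c h : ℝ)
    (h0 : 0 < h) (hc : h ≤ c) (hc' : h ≤ 1 - c) (σ : Fin V → Bool) (x : Fin V)
    (hx : n * (w x * (h ^ 2 / c + h ^ 2 / (1 - c))) ≤ 1 / 4) :
    1 / 4 ≤ ∑ z : Fin n → Fin V × Bool, min (∏ i, qq w c h σ (z i))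
      (∏ i, qq w c h (Function.update σ x (!σ x)) (z i)) := by
  have hq := fun τ t => qq_nonneg w hw c h h0.le hc hc' τ t
  have h1 := sum_min_lower (fun z : Fin n → Fin V × Bool => ∏ i, qq w c h σ (z i))
    (fun z => ∏ i, qq w c h (Function.update σ x (!σ x)) (z i))
    (fun z => Finset.prod_nonneg fun i _ => hq _ _) (fun z => Finset.prod_nonneg fun i _ => hq _ _)
    (by rw [sum_pi, qq_sum w sw, one_pow]) (by rw [sum_pi, qq_sum w sw, one_pow])
  have h2 : ∀ z : Fin n → Fin V × Bool, Real.sqrt ((∏ i, qq w c h σ (z i)) *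
      (∏ i, qq w c h (Function.update σ x (!σ x)) (z i))) =
      ∏ i, Real.sqrt (qq w c h σ (z i) * qq w c h (Function.update σ x (!σ x)) (z i)) := by
    intro z
    rw [← Finset.prod_mul_distrib, Real.sqrt_prod]
    exact fun i _ => mul_nonneg (hq _ _) (hq _ _)
  simp only [h2] at h1
  rw [sum_pi n (fun t => Real.sqrt (qq w c h σ t * qq w c h (Function.update σ x (!σ x)) t))] at h1
  have h3 := bc_lower w hw sw c h h0 hc hc' σ x
  set B := ∑ t, Real.sqrt (qq w c h σ t * qq w c h (Function.update σ x (!σ x)) t)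
  have hB : 0 ≤ B := Finset.sum_nonneg fun _ _ => Real.sqrt_nonneg _
  have h4 : 1 + (n : ℝ) * (B - 1) ≤ B ^ n := one_add_mul_sub_le_pow (by linarith) n
  have h5 : 3 / 4 ≤ B ^ n := by
    have : (n : ℝ) * (1 - B) ≤ 1 / 4 := le_trans
      (mul_le_mul_of_nonneg_left (by linarith) (Nat.cast_nonneg n)) hx
    linarith
  nlinarith

lemma comb {V : ℕ} (n : ℕ) (w : Fin V → ℝ) (hw : ∀ i, 0 ≤ w i) (sw : ∑ i, w i = 1) (c h : ℝ)
    (h0 : 0 < h) (hc : h ≤ c) (hc' : h ≤ 1 - c) (S : Finset (Fin V))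
    (hx : ∀ x ∈ S, n * (w x * (h ^ 2 / c + h ^ 2 / (1 - c))) ≤ 1 / 4)
    (e : Bool → (Fin n → Fin V × Bool) → Fin V → ℝ) (he0 : ∀ b z x, 0 ≤ e b z x)
    (he : ∀ b z x, e b z x + e (!b) z x = 1) :
    ∃ σ : Fin V → Bool, (∑ x ∈ S, w x * h) / 8 ≤
      ∑ z : Fin n → Fin V × Bool, (∏ i, qq w c h σ (z i)) * ∑ x, w x * h * e (σ x) z x := by
  have hq := fun τ t => qq_nonneg w hw c h h0.le hc hc' τ t
  have hP : ∀ τ (z : Fin n → Fin V × Bool), 0 ≤ ∏ i, qq w c h τ (z i) :=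
    fun τ z => Finset.prod_nonneg fun i _ => hq _ _
  have key : ∀ x ∈ S, ∑ σ : Fin V → Bool, (1 / 8 : ℝ) ≤
      ∑ σ : Fin V → Bool, ∑ z : Fin n → Fin V × Bool, (∏ i, qq w c h σ (z i)) * e (σ x) z x := by
    intro x hxS
    let f : (Fin V → Bool) → ℝ := fun σ =>
      ∑ z : Fin n → Fin V × Bool, (∏ i, qq w c h σ (z i)) * e (σ x) z x
    have inv : Function.Involutive (fun σ : Fin V → Bool => Function.update σ x (!σ x)) := by
      intro σ; simp
    have hs : ∑ σ, f (Function.update σ x (!σ x)) = ∑ σ, f σ := 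
      Equiv.sum_comp inv.toPerm f
    have hl : ∀ σ, 1 / 4 ≤ f σ + f (Function.update σ x (!σ x)) := by
      intro σ
      refine (pair_lower n w hw sw c h h0 hc hc' σ x (hx x hxS)).trans ?_
      simp only [f]
      rw [← Finset.sum_add_distrib]
      refine Finset.sum_le_sum fun z _ => ?_
      rw [Function.update_self]
      set P := ∏ i, qq w c h σ (z i)
      set Q := ∏ i, qq w c h (Function.update σ x (!σ x)) (z i)
      have := he (σ x) z x
      have i1 := mul_le_mul_of_nonneg_right (min_le_left P Q) (he0 (σ x) z x)
      have i2 := mul_le_mul_of_nonneg_right (min_le_right P Q) (he0 (!σ x) z x)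
      calc min P Q = min P Q * e (σ x) z x + min P Q * e (!σ x) z x := by rw [← mul_add, this, mul_one]
        _ ≤ _ := add_le_add i1 i2
    have := Finset.sum_le_sum fun σ (_ : σ ∈ Finset.univ) => hl σ
    rw [Finset.sum_add_distrib, hs] at this
    have e2 : ∑ σ : Fin V → Bool, (1 / 4 : ℝ) = 2 * ∑ σ : Fin V → Bool, (1 / 8 : ℝ) := by
      rw [Finset.mul_sum]; norm_num
    change _ ≤ ∑ σ, f σ
    linarith
  have tot : ∑ σ : Fin V → Bool, (∑ x ∈ S, w x * h) / 8 ≤ ∑ σ : Fin V → Bool,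
      ∑ z : Fin n → Fin V × Bool, (∏ i, qq w c h σ (z i)) * ∑ x, w x * h * e (σ x) z x := by
    calc ∑ σ : Fin V → Bool, (∑ x ∈ S, w x * h) / 8 
        = ∑ x ∈ S, w x * h * ∑ σ : Fin V → Bool, (1 / 8 : ℝ) := by
          simp only [Finset.sum_const, nsmul_eq_mul, ← Finset.sum_mul]
          ring
      _ ≤ ∑ x ∈ S, w x * h * ∑ σ : Fin V → Bool, ∑ z : Fin n → Fin V × Bool,
            (∏ i, qq w c h σ (z i)) * e (σ x) z x :=
          Finset.sum_le_sum fun x hxS => mul_le_mul_of_nonneg_left (key x hxS)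
            (mul_nonneg (hw x) h0.le)
      _ ≤ ∑ x, w x * h * ∑ σ : Fin V → Bool, ∑ z : Fin n → Fin V × Bool,
            (∏ i, qq w c h σ (z i)) * e (σ x) z x := by
          refine Finset.sum_le_sum_of_subset_of_nonneg (Finset.subset_univ _) fun x _ _ => ?_
          exact mul_nonneg (mul_nonneg (hw x) h0.le) (Finset.sum_nonneg fun σ _ =>
            Finset.sum_nonneg fun z _ => mul_nonneg (hP _ _) (he0 _ _ _))
      _ = _ := by
          simp_rw [Finset.mul_sum]
          rw [Finset.sum_comm]
          refine Finset.sum_congr rfl fun σ _ => ?_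
          rw [Finset.sum_comm]
          refine Finset.sum_congr rfl fun z _ => Finset.sum_congr rfl fun x _ => ?_
          ring
  obtain ⟨σ, -, hσ⟩ := Finset.exists_le_of_sum_le Finset.univ_nonempty tot
  exact ⟨σ, hσ⟩

section measure_part

variable {X : Type} [MeasurableSpace X]

noncomputable def MM {V : ℕ} (w : Fin V → ℝ) (u : Fin V → X) : Measure X :=
  ∑ i, ENNReal.ofReal (w i) • Measure.dirac (u i)

noncomputable def QQ {V : ℕ} (w : Fin V → ℝ) (c h : ℝ) (σ : Fin V → Bool) :
    Measure (Fin V × Bool) :=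
  ∑ t, ENNReal.ofReal (qq w c h σ t) • Measure.dirac t

lemma MM_prob {V : ℕ} (w : Fin V → ℝ) (hw : ∀ i, 0 ≤ w i) (sw : ∑ i, w i = 1) (u : Fin V → X) :
    IsProbabilityMeasure (MM w u) := by
  constructor
  simp [MM, ← ENNReal.ofReal_sum_of_nonneg (fun i _ => hw i), sw]

lemma QQ_singleton {V : ℕ} (w : Fin V → ℝ) (c h : ℝ) (σ : Fin V → Bool) (t : Fin V × Bool) :
    QQ w c h σ {t} = ENNReal.ofReal (qq w c h σ t) := by
  classical
  simp only [QQ, Measure.coe_finsetSum, Finset.sum_apply, Measure.smul_apply, smul_eq_mul]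
  rw [Finset.sum_eq_single t]
  · simp
  · intro b _ hb
    simp [hb]
  · simp

instance {V : ℕ} (w : Fin V → ℝ) (c h : ℝ) (σ : Fin V → Bool) : IsFiniteMeasure (QQ w c h σ) := by
  constructor
  simp [QQ, ENNReal.sum_lt_top]

lemma joint_eq {V : ℕ} (w : Fin V → ℝ) (hw : ∀ i, 0 ≤ w i) (u : Fin V → X)
    (c h : ℝ) (σ : Fin V → Bool) (η : X → ℝ) (hη : Measurable η)
    (hu : ∀ i, η (u i) = ee c h (σ i)) :
    joint (MM w u) η = (QQ w c h σ).map (Prod.map u id) := by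
  have hum : Measurable (Prod.map u (id : Bool → Bool)) := measurable_of_finite _
  have e : ∀ f : X → ENNReal, Measurable f → (MM w u).withDensity f =
      ∑ i, (ENNReal.ofReal (w i) * f (u i)) • Measure.dirac (u i) := by
    intro f hf
    rw [MM, ← Measure.sum_fintype, withDensity_sum, Measure.sum_fintype]
    refine Finset.sum_congr rfl fun i _ => ?_
    rw [withDensity_smul_measure, dirac_withDensity' hf, smul_smul]
  have m1 : Measurable (fun x => ENNReal.ofReal (η x)) := hη.ennreal_ofReal
  have m2 : Measurable (fun x => ENNReal.ofReal (1 - η x)) := (hη.const_sub 1).ennreal_ofReal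
  have ms : ∀ {A B : Type} [MeasurableSpace A] [MeasurableSpace B] {I : Type} [Fintype I]
      (a : I → ENNReal) (v : I → A) (g : A → B), Measurable g →
      (∑ i, a i • Measure.dirac (v i)).map g = ∑ i, a i • Measure.dirac (g (v i)) := by
    intro A B _ _ I _ a v g hg
    rw [← Measure.mapₗ_apply_of_measurable hg, map_sum]
    refine Finset.sum_congr rfl fun i _ => ?_
    rw [map_smul, Measure.mapₗ_apply_of_measurable hg, Measure.map_dirac' hg]
  rw [joint, e _ m1, e _ m2, ms _ _ _ (by fun_prop), ms _ _ _ (by fun_prop), QQ, ms _ _ _ hum,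
    Fintype.sum_prod_type, ← Finset.sum_add_distrib]
  refine Finset.sum_congr rfl fun i _ => ?_
  rw [Fintype.sum_bool]
  simp [qq, hu, ENNReal.ofReal_mul (hw i)]

lemma joint_prob (M : Measure X) [IsProbabilityMeasure M] (η : X → ℝ) (hη : Measurable η)
    (h01 : ∀ x, η x ∈ Set.Icc (0 : ℝ) 1) : IsProbabilityMeasure (joint M η) := by
  constructor
  have m1 : Measurable (fun x => ENNReal.ofReal (η x)) := hη.ennreal_ofReal
  rw [joint, Measure.add_apply, Measure.map_apply (by fun_prop) .univ,
    Measure.map_apply (by fun_prop) .univ]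
  simp only [Set.preimage_univ, withDensity_apply _ MeasurableSet.univ, Measure.restrict_univ]
  rw [← lintegral_add_left m1]
  have : ∀ x, ENNReal.ofReal (η x) + ENNReal.ofReal (1 - η x) = 1 := by
    intro x
    rw [← ENNReal.ofReal_add (h01 x).1 (by linarith [(h01 x).2])]; simp
  simp [this]

lemma dcost_bound (c : ℝ) (hc : c ∈ Set.Ioo (0 : ℝ) 1) (y y' : ℝ) : ‖dcost c y y'‖ ≤ 1 := by
  obtain ⟨h1, h2⟩ := hc
  rw [Real.norm_eq_abs, abs_le]
  unfold dcost
  split_ifs <;> first | (exfalso; linarith) | (constructor <;> linarith)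

lemma er_bound (c : ℝ) (hc : c ∈ Set.Ioo (0 : ℝ) 1) (f : X → ℝ) (D : Measure (X × Bool))
    [IsProbabilityMeasure D] : ‖er c f D‖ ≤ 1 := by
  have := norm_integral_le_of_norm_le_const (μ := D) (C := 1)
    (f := fun z => dcost c (if z.2 then 1 else -1) (f z.1)) (.of_forall fun z => dcost_bound c hc _ _)
  simpa [er] using this

lemma regret_bound (c : ℝ) (hc : c ∈ Set.Ioo (0 : ℝ) 1) {T : Type*} [MeasurableSpace T] (n : ℕ)
    (φ : T → X → ℝ) (g : X → ℝ)
    (κ : Kernel (Fin n → X × Bool) T) [IsMarkovKernel κ] (D : Measure (X × Bool))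
    [IsProbabilityMeasure D] :
    ∫ o, (∫ f, (er c (φ f) D - er c g D) ∂(κ o)) ∂(Measure.pi fun _ : Fin n => D) ≤ 2 := by
  have h1 : ∀ o, ‖∫ f, (er c (φ f) D - er c g D) ∂(κ o)‖ ≤ 2 := by
    intro o
    have := norm_integral_le_of_norm_le_const (μ := κ o) (C := 2)
      (f := fun f => er c (φ f) D - er c g D) (.of_forall fun z => (norm_sub_le _ _).trans
        (by linarith [er_bound c hc (φ z) D, er_bound c hc g D]))
    simpa using this
  have := norm_integral_le_of_norm_le_const (μ := Measure.pi fun _ : Fin n => D) (C := 2)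
    (.of_forall h1)
  simp only [probReal_univ, mul_one] at this
  exact (Real.le_norm_self _).trans this

lemma er_eq {V : ℕ} (w : Fin V → ℝ) (hw : ∀ i, 0 ≤ w i) (u : Fin V → X)
    (c h : ℝ) (h0 : 0 ≤ h) (hc : h ≤ c) (hc' : h ≤ 1 - c) (σ : Fin V → Bool) (f : X → ℝ)
    (hf : Measurable f) :
    er c f ((QQ w c h σ).map (Prod.map u id)) =
      ∑ t, qq w c h σ t * dcost c (if t.2 then 1 else -1) (f (u t.1)) := by
  have hum : Measurable (Prod.map u (id : Bool → Bool)) := measurable_of_finite _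
  have hd : Measurable fun z : X × Bool => dcost c (if z.2 then 1 else -1) (f z.1) := by
    have hb : Measurable fun z : X × Bool => (if z.2 then (1 : ℝ) else -1) :=
      (measurable_of_finite (fun b : Bool => if b then (1 : ℝ) else -1)).comp measurable_snd
    have hf' : Measurable fun z : X × Bool => f z.1 := hf.comp measurable_fst
    unfold dcost
    refine Measurable.mul (Measurable.ite (measurableSet_eq_fun hf' hb) (by fun_prop) (by fun_prop)) ?_
    refine Measurable.add (Measurable.const_mul ?_ _) (Measurable.const_mul ?_ _)
    · exact Measurable.ite (hb (measurableSet_singleton _)) (by fun_prop) (by fun_prop)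
    · exact Measurable.ite (hb (measurableSet_singleton _)) (by fun_prop) (by fun_prop)
  rw [er, integral_map hum.aemeasurable hd.aestronglyMeasurable, integral_fintype .of_finite]
  refine Finset.sum_congr rfl fun t _ => ?_
  rw [measureReal_def, QQ_singleton, ENNReal.toReal_ofReal (qq_nonneg w hw c h h0 hc hc' σ t)]
  rfl

lemma regret_eq {V : ℕ} (w : Fin V → ℝ) (hw : ∀ i, 0 ≤ w i) (u : Fin V → X)
    (c h : ℝ) (h0 : 0 ≤ h) (hc : h ≤ c) (hc' : h ≤ 1 - c) (σ : Fin V → Bool) (f g : X → ℝ)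
    (hf : Measurable f) (hg : Measurable g) (hf1 : ∀ x, f x = 1 ∨ f x = -1)
    (hgσ : ∀ i, g (u i) = if σ i then 1 else -1) :
    er c f ((QQ w c h σ).map (Prod.map u id)) - er c g ((QQ w c h σ).map (Prod.map u id)) =
      ∑ i, w i * h * (if f (u i) = (if σ i then 1 else -1) then 0 else 1) := by
  rw [er_eq w hw u c h h0 hc hc' σ f hf, er_eq w hw u c h h0 hc hc' σ g hg,
    ← Finset.sum_sub_distrib, Fintype.sum_prod_type]
  refine Finset.sum_congr rfl fun i _ => ?_
  rw [Fintype.sum_bool]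
  have n1 : (-1 : ℝ) ≠ 1 := by norm_num
  have n2 : (1 : ℝ) ≠ -1 := by norm_num
  simp only [hgσ, qq, dcost, ee]
  rcases hf1 (u i) with hfi | hfi <;> rw [hfi] <;> cases σ i <;> simp [n1, n2] <;> ring

lemma integral_pi_eq {V : ℕ} (n : ℕ) (w : Fin V → ℝ) (hw : ∀ i, 0 ≤ w i) (u : Fin V → X)
    (c h : ℝ) (h0 : 0 ≤ h) (hc : h ≤ c) (hc' : h ≤ 1 - c) (σ : Fin V → Bool)
    (G : (Fin n → X × Bool) → ℝ) (hG : StronglyMeasurable G) :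
    ∫ o, G o ∂(Measure.pi fun _ : Fin n => (QQ w c h σ).map (Prod.map u id)) =
      ∑ z : Fin n → Fin V × Bool, (∏ i, qq w c h σ (z i)) * G (fun i => Prod.map u id (z i)) := by
  have hum : Measurable (Prod.map u (id : Bool → Bool)) := measurable_of_finite _
  rw [← Measure.pi_map_pi (fun _ => hum.aemeasurable),
    integral_map (measurable_of_finite _).aemeasurable hG.aestronglyMeasurable,
    integral_fintype .of_finite]
  refine Finset.sum_congr rfl fun z _ => ?_
  rw [measureReal_def, Measure.pi_singleton, ENNReal.toReal_prod]
  simp only [QQ_singleton, ENNReal.toReal_ofReal (qq_nonneg w hw c h h0 hc hc' σ _), smul_eq_mul]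

end measure_part

lemma main_lower (X : Type) [MeasurableSpace X] (c : ℝ) (hc : c ∈ Set.Ioo (0 : ℝ) 1)
    (F : Set (X → ℝ)) (hFm : ∀ f ∈ F, Measurable f) (hF1 : ∀ f ∈ F, ∀ x, f x = 1 ∨ f x = -1)
    (V : ℕ) (u : Fin V → X) (g : (Fin V → Bool) → X → ℝ) (hgF : ∀ σ, g σ ∈ F)
    (hgu : ∀ σ i, g σ (u i) = if σ i then 1 else -1) (n : ℕ)
    (w : Fin V → ℝ) (hw : ∀ i, 0 ≤ w i) (sw : ∑ i, w i = 1) (h₀ h : ℝ) (hh : h₀ ≤ h)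
    (h0 : 0 < h) (h1 : h ≤ c) (h1' : h ≤ 1 - c) (S : Finset (Fin V))
    (hx : ∀ x ∈ S, n * (w x * (h ^ 2 / c + h ^ 2 / (1 - c))) ≤ 1 / 4) :
    letI : MeasurableSpace ↥F := ⊤
    ∀ κ : {κ : Kernel (Fin n → X × Bool) ↥F // IsMarkovKernel κ},
      (∑ x ∈ S, w x * h) / 8 ≤ 
        ⨆ M : Measure X, ⨆ η : X → ℝ,
        ⨆ _ : IsProbabilityMeasure M ∧ Measurable η ∧ (∀ x, η x ∈ Set.Icc (0 : ℝ) 1) ∧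
            (∀ᵐ x ∂M, h₀ ≤ |η x - c|) ∧
            (∃ g ∈ F, ∀ x, g x = if c ≤ η x then 1 else -1),
          ∫ o, (∫ f : ↥F,
              (er c f.1 (joint M η)
                - er c (fun x => if c ≤ η x then (1 : ℝ) else -1) (joint M η)) ∂(κ.1 o))
            ∂(Measure.pi fun _ : Fin n => joint M η) := by
  letI : MeasurableSpace ↥F := ⊤
  rintro ⟨κ, hκ⟩
  have fm : ∀ f : ↥F → ℝ, Measurable f := fun f => measurable_from_top
  -- the error probabilities
  let e : Bool → (Fin n → Fin V × Bool) → Fin V → ℝ := fun b z i =>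
    ∫ f : ↥F, (if f.1 (u i) = (if b then 1 else -1) then 0 else 1)
      ∂(κ (fun j => Prod.map u id (z j)))
  have hint : ∀ o (i : Fin V) (b : Bool), Integrable
      (fun f : ↥F => (if f.1 (u i) = (if b then 1 else -1) then (0 : ℝ) else 1)) (κ o) := by
    intro o i b
    refine Integrable.of_bound (fm _).aestronglyMeasurable 1 (.of_forall fun f => ?_)
    split_ifs <;> simp
  have he0 : ∀ b z x, 0 ≤ e b z x := fun b z x => integral_nonneg fun f => by
    simp only [Pi.zero_apply]
    split_ifs <;> simp
  have he : ∀ b z x, e b z x + e (!b) z x = 1 := by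
    intro b z x
    simp only [e]
    rw [← integral_add (hint _ _ _) (hint _ _ _)]
    have : ∀ f : ↥F, ((if f.1 (u x) = (if b then 1 else -1) then (0 : ℝ) else 1) +
        (if f.1 (u x) = (if (!b) then 1 else -1) then (0 : ℝ) else 1)) = 1 := by
      intro f
      have n1 : (-1 : ℝ) ≠ 1 := by norm_num
      have n2 : (1 : ℝ) ≠ -1 := by norm_num
      rcases hF1 f.1 f.2 (u x) with hf | hf <;> rw [hf] <;> cases b <;> simp [n1, n2]
    simp_rw [this]
    simp
  obtain ⟨σ, hσ⟩ := comb n w hw sw c h h0 h1 h1' S hx e he0 he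
  refine hσ.trans ?_
  let η : X → ℝ := fun x => if g σ x = 1 then c + h else c - h
  have gm : Measurable (g σ) := hFm _ (hgF σ)
  have hη : Measurable η := Measurable.ite (gm (measurableSet_singleton _)) (by fun_prop) (by fun_prop)
  have hηu : ∀ i, η (u i) = ee c h (σ i) := by
    intro i
    simp only [η, hgu, ee]
    cases σ i <;> simp; norm_num
  have hηc : ∀ x, g σ x = if c ≤ η x then 1 else -1 := by
    intro x
    simp only [η]
    rcases hF1 _ (hgF σ) x with hg | hg
    · simp [hg, h0.le]
    · have n1 : (-1 : ℝ) ≠ 1 := by norm_num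
      have n2 : ¬ (c ≤ c - h) := by linarith
      simp only [hg, if_neg n1, if_neg n2]
  have hp := MM_prob w hw sw u
  have hcond : IsProbabilityMeasure (MM w u) ∧ Measurable η ∧ (∀ x, η x ∈ Set.Icc (0 : ℝ) 1) ∧
            (∀ᵐ x ∂(MM w u), h₀ ≤ |η x - c|) ∧
            (∃ g ∈ F, ∀ x, g x = if c ≤ η x then 1 else -1) := by
    refine ⟨hp, hη, fun x => ?_, .of_forall fun x => ?_, g σ, hgF σ, hηc⟩
    · simp only [η]; split_ifs <;> constructor <;> linarith
    · simp only [η]; split_ifs <;> simp [abs_of_pos h0, hh]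
  have bd : ∀ (M : Measure X) (η : X → ℝ),
        (⨆ _ : IsProbabilityMeasure M ∧ Measurable η ∧ (∀ x, η x ∈ Set.Icc (0 : ℝ) 1) ∧
            (∀ᵐ x ∂M, h₀ ≤ |η x - c|) ∧
            (∃ g ∈ F, ∀ x, g x = if c ≤ η x then 1 else -1),
          ∫ o, (∫ f : ↥F,
              (er c f.1 (joint M η)
                - er c (fun x => if c ≤ η x then (1 : ℝ) else -1) (joint M η)) ∂(κ o))
            ∂(Measure.pi fun _ : Fin n => joint M η)) ≤ 2 := by
    intro M η
    refine Real.iSup_le (fun hh => ?_) (by norm_num)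
    haveI := hh.1
    haveI := joint_prob M η hh.2.1 hh.2.2.1
    exact regret_bound c hc n (fun f : ↥F => f.1) _ κ (joint M η)
  refine le_trans ?_ (le_ciSup (f := fun M => ⨆ η, _) ⟨2, ?_⟩ (MM w u))
  rotate_left
  · rintro _ ⟨M, rfl⟩
    exact Real.iSup_le (fun η => bd M η) (by norm_num)
  refine le_trans ?_ (le_ciSup (f := fun η => _) ⟨2, ?_⟩ η)
  rotate_left
  · rintro _ ⟨η, rfl⟩
    exact bd _ η
  rw [ciSup_pos hcond, joint_eq w hw u c h σ η hη hηu]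
  have hgeq : (fun x => if c ≤ η x then (1 : ℝ) else -1) = g σ := funext fun x => (hηc x).symm
  rw [hgeq]
  have hreg : ∀ f : ↥F, er c f.1 ((QQ w c h σ).map (Prod.map u id)) -
      er c (g σ) ((QQ w c h σ).map (Prod.map u id)) =
      ∑ i, w i * h * (if f.1 (u i) = (if σ i then 1 else -1) then 0 else 1) := fun f =>
    regret_eq w hw u c h h0.le h1 h1' σ f.1 (g σ) (hFm _ f.2) gm (hF1 _ f.2) (hgu σ)
  simp only [hreg]
  have hsm : StronglyMeasurable fun o => ∫ f : ↥F,
      (∑ i, w i * h * (if f.1 (u i) = (if σ i then 1 else -1) then (0 : ℝ) else 1)) ∂(κ o) :=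
    StronglyMeasurable.integral_kernel (κ := κ) (fm _).stronglyMeasurable
  rw [integral_pi_eq n w hw u c h h0.le h1 h1' σ _ hsm]
  refine le_of_eq (Finset.sum_congr rfl fun z _ => ?_)
  congr 1
  rw [integral_finsetSum _ fun i _ => (hint _ i (σ i)).const_mul _]
  simp only [integral_const_mul, e]

lemma main_lower2 (X : Type) [MeasurableSpace X] (c : ℝ) (hc : c ∈ Set.Ioo (0 : ℝ) 1)
    (F : Set (X → ℝ)) (hFm : ∀ f ∈ F, Measurable f) (hF1 : ∀ f ∈ F, ∀ x, f x = 1 ∨ f x = -1)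
    (V : ℕ) (hV : 2 ≤ V) (hVC : VCdim F V) (n : ℕ)
    (p h₀ h : ℝ) (hp : 0 ≤ p) (hVp : V * p ≤ 1) (hh : h₀ ≤ h)
    (h0 : 0 < h) (h1 : h ≤ min c (1 - c)) (hnp : 8 * (n * p * h ^ 2) ≤ min c (1 - c)) :
    letI : MeasurableSpace ↥F := ⊤
    ∀ κ : {κ : Kernel (Fin n → X × Bool) ↥F // IsMarkovKernel κ},
      V * p * h / 16 ≤
        ⨆ M : Measure X, ⨆ η : X → ℝ,
        ⨆ _ : IsProbabilityMeasure M ∧ Measurable η ∧ (∀ x, η x ∈ Set.Icc (0 : ℝ) 1) ∧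
            (∀ᵐ x ∂M, h₀ ≤ |η x - c|) ∧
            (∃ g ∈ F, ∀ x, g x = if c ≤ η x then 1 else -1),
          ∫ o, (∫ f : ↥F,
              (er c f.1 (joint M η)
                - er c (fun x => if c ≤ η x then (1 : ℝ) else -1) (joint M η)) ∂(κ.1 o))
            ∂(Measure.pi fun _ : Fin n => joint M η) := by
  letI : MeasurableSpace ↥F := ⊤
  intro κ
  obtain ⟨⟨s, hs, hsh⟩, -⟩ := hVC
  let u : Fin V → X := fun i => (s.equivFinOfCardEq hs).symm i
  have hu : Function.Injective u := Subtype.val_injective.comp (Equiv.injective _)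
  have hus : ∀ i, u i ∈ s := fun i => Subtype.property _
  have hex : ∀ σ : Fin V → Bool, ∃ f ∈ F, ∀ i, f (u i) = if σ i then 1 else -1 := by
    intro σ
    obtain ⟨f, hf, hfs⟩ := hsh (Function.extend u σ fun _ => true)
    refine ⟨f, hf, fun i => ?_⟩
    rw [hfs _ (hus i), hu.extend_apply]
  choose g hgF hgu using hex
  have hV' : (2 : ℝ) ≤ V := by exact_mod_cast hV
  let x0 : Fin V := ⟨0, by omega⟩
  let w : Fin V → ℝ := fun i => if i = x0 then 1 - (V - 1) * p else p
  have hw : ∀ i, 0 ≤ w i := by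
    intro i
    simp only [w]
    split_ifs
    · nlinarith
    · exact hp
  have hwS : ∀ i ∈ Finset.univ.erase x0, w i = p := by
    intro i hi
    simp [w, Finset.ne_of_mem_erase hi]
  have hcard : ((Finset.univ.erase x0).card : ℝ) = V - 1 := by
    rw [Finset.card_erase_of_mem (Finset.mem_univ _), Finset.card_univ, Fintype.card_fin]
    push_cast [show 1 ≤ V by omega]
    ring
  have sw : ∑ i, w i = 1 := by
    rw [← Finset.add_sum_erase _ _ (Finset.mem_univ x0), Finset.sum_congr rfl hwS,
      Finset.sum_const, nsmul_eq_mul, hcard]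
    simp [w]
  have hm0 : 0 < min c (1 - c) := lt_of_lt_of_le h0 h1
  have a1 : h ^ 2 / c ≤ h ^ 2 / min c (1 - c) :=
    div_le_div_of_nonneg_left (sq_nonneg _) hm0 (min_le_left _ _)
  have a2 : h ^ 2 / (1 - c) ≤ h ^ 2 / min c (1 - c) :=
    div_le_div_of_nonneg_left (sq_nonneg _) hm0 (min_le_right _ _)
  have := main_lower X c hc F hFm hF1 V u g hgF hgu n w hw sw h₀ h hh h0
    (h1.trans (min_le_left _ _)) (h1.trans (min_le_right _ _)) (Finset.univ.erase x0) (by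
      intro x hx
      rw [hwS x hx, ← mul_assoc]
      have a3 : 0 ≤ (n : ℝ) * p := by positivity
      calc n * p * (h ^ 2 / c + h ^ 2 / (1 - c))
          ≤ n * p * (h ^ 2 / min c (1 - c) + h ^ 2 / min c (1 - c)) := by gcongr
        _ = 2 * (n * p * h ^ 2) / min c (1 - c) := by ring
        _ ≤ 1 / 4 := by rw [div_le_iff₀ hm0]; linarith) κ
  refine le_trans ?_ this
  rw [← Finset.sum_mul, Finset.sum_congr rfl hwS, Finset.sum_const, nsmul_eq_mul, hcard]
  have : 0 ≤ p * h := by positivity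
  nlinarith

/-- minimax lower bound for cost-sensitive classification. There is an
absolute constant `K > 0` such that for every cost `c ∈ (0,1)`, every class `F` of
measurable `{−1,1}`-valued functions of VC dimension `V ≥ 2`, every margin
`h ∈ [0, min(c, 1−c)]` and every sample size `n ≥ V`, the minimax regret risk — the
infimum over learning rules (Markov kernels from `(X × {−1,1})ⁿ` to `F`) of the supremum
over the class `Θ_{h,F}` (distributions, described by marginal `M` and posterior `η`,
whose Bayes classifier `f*(x) = 1` iff `η(x) ≥ c` agrees with a member of `F` and with
`|η(X) − c| ≥ h` a.s.) of the expected regret — is at least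
`K · min(c,1−c) · min(√(min(c,1−c)·V/n), min(c,1−c)·V/(n·h))`. -/
theorem minimax_lower_bound_cost_sensitive :
    ∃ K : ℝ, 0 < K ∧
      ∀ (X : Type) [MeasurableSpace X] (c : ℝ), c ∈ Set.Ioo (0 : ℝ) 1 →
      ∀ F : Set (X → ℝ), (∀ f ∈ F, Measurable f) →
        (∀ f ∈ F, ∀ x, f x = 1 ∨ f x = -1) →
      ∀ V : ℕ, 2 ≤ V → VCdim F V →
      ∀ h : ℝ, 0 ≤ h → h ≤ min c (1 - c) →
      ∀ n : ℕ, V ≤ n →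
      letI : MeasurableSpace ↥F := ⊤
      (⨅ κ : {κ : Kernel (Fin n → X × Bool) ↥F // IsMarkovKernel κ},
        ⨆ M : Measure X, ⨆ η : X → ℝ,
        ⨆ _ : IsProbabilityMeasure M ∧ Measurable η ∧ (∀ x, η x ∈ Set.Icc (0 : ℝ) 1) ∧
            (∀ᵐ x ∂M, h ≤ |η x - c|) ∧
            (∃ g ∈ F, ∀ x, g x = if c ≤ η x then 1 else -1),
          ∫ o, (∫ f : ↥F,
              (er c f.1 (joint M η)
                - er c (fun x => if c ≤ η x then (1 : ℝ) else -1) (joint M η)) ∂(κ.1 o))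
            ∂(Measure.pi fun _ : Fin n => joint M η))
      ≥ K * min c (1 - c)
          * min (Real.sqrt (min c (1 - c) * V / n)) (min c (1 - c) * V / (n * h)) := by
  refine ⟨1 / 128, by norm_num, ?_⟩
  intro X _ c hc F hFm hF1 V hV hVC h h0 h1 n hn
  letI : MeasurableSpace ↥F := ⊤
  have hV' : (2 : ℝ) ≤ V := by exact_mod_cast hV
  have hn' : (V : ℝ) ≤ n := by exact_mod_cast hn
  have hn0 : (0 : ℝ) < n := by linarith
  have hm0 : 0 < min c (1 - c) := lt_min hc.1 (by linarith [hc.2])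
  have hm1 : min c (1 - c) ≤ 1 := (min_le_left _ _).trans hc.2.le
  have hne : Nonempty {κ : Kernel (Fin n → X × Bool) ↥F // IsMarkovKernel κ} := by
    obtain ⟨⟨s, hs, hsh⟩, -⟩ := hVC
    obtain ⟨f, hf, -⟩ := hsh fun _ => true
    exact ⟨⟨Kernel.const _ (Measure.dirac ⟨f, hf⟩), inferInstance⟩⟩
  refine le_ciInf fun κ => ?_
  set m := min c (1 - c) with hm
  set r := Real.sqrt (m * V / n) with hr
  have hr2 : r ^ 2 = m * V / n := Real.sq_sqrt (by positivity)
  have hr0 : 0 < r := Real.sqrt_pos.2 (by positivity)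
  have hr2' : n * r ^ 2 = m * V := by rw [hr2]; field_simp
  have hr1 : r ≤ 1 := by
    have : m * V / n ≤ 1 := by
      rw [div_le_one hn0]
      nlinarith
    nlinarith
  by_cases hcase : r ≤ h
  · have hpos : 0 < h := lt_of_lt_of_le hr0 hcase
    have key := main_lower2 X c hc F hFm hF1 V hV hVC n (m / (8 * n * h ^ 2)) h h (by positivity)
      (by
        rw [← mul_div_assoc, div_le_one (by positivity)]
        have : n * r ^ 2 ≤ n * h ^ 2 := by gcongr
        nlinarith) le_rfl hpos h1 (by
        apply le_of_eq
        rw [← hm]; field_simp) κ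
    refine le_trans ?_ key
    have e : V * (m / (8 * n * h ^ 2)) * h / 16 = 1 / 128 * (m * V / (n * h)) := by
      field_simp; norm_num
    rw [e]
    have hq : 0 ≤ m * V / (n * h) := by positivity
    calc 1 / 128 * m * min r (m * V / (n * h)) ≤ 1 / 128 * m * (m * V / (n * h)) := by
          gcongr; exact min_le_right _ _
      _ ≤ 1 / 128 * 1 * (m * V / (n * h)) := by gcongr
      _ = _ := by ring
  · push Not at hcase
    have hk0 : 0 < min m r := lt_min hm0 hr0
    have key := main_lower2 X c hc F hFm hF1 V hV hVC n (1 / (8 * V)) h (min m r) (by positivity)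
      (by
        rw [← mul_div_assoc, div_le_one (by positivity)]
        linarith) (le_min h1 hcase.le) hk0 (min_le_left _ _) (by
        have : n * (min m r) ^ 2 ≤ n * r ^ 2 := by gcongr; exact min_le_right _ _
        rw [hr2'] at this
        calc 8 * (n * (1 / (8 * V)) * (min m r) ^ 2) = n * (min m r) ^ 2 / V := by field_simp
          _ ≤ m := by rw [div_le_iff₀ (by positivity)]; exact this) κ
    refine le_trans ?_ key
    have e : V * (1 / (8 * V)) * min m r / 16 = 1 / 128 * min m r := by
      field_simp; norm_num
    rw [e]
    have h3 : m * r ≤ min m r := le_min (by nlinarith) (by nlinarith)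
    calc 1 / 128 * m * min r (m * V / (n * h)) ≤ 1 / 128 * m * r := by
          gcongr; exact min_le_left _ _
      _ ≤ _ := by linarith
end
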